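/- arXiv:0810.3374 — 2 statements merged into one kernel-verified Lean document; each statement's English description precedes it below -/
import Mathlib

section
/- Let m ∈ ℤ and let L_m be the splitting field of f_m over ℚ, a totally real cyclic cubic number field. Let p₁, …, p_s be the primes different from 3 that divide m²+3m+9 with an exponent not congruent to 0 modulo 3. Then the discriminant of the number field L_m equals 𝔣_m², where the conductor 𝔣_m is given by: 𝔣_m = p₁⋯p_s if m ≢ 0 (mod 3) or m ≡ 12 (mod 27), and 𝔣_m = 9·p₁⋯p_s if m ≡ 0 (mod 3) and m ≢ 12 (mod 27). -/
/-!
The discriminant is computed one prime at a time. If `θ` is an integral generator of a number field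
`K`, then `disc (minpoly θ) = [𝓞 K : ℤ[θ]]² · disc K`, and `p` does not divide the index when
`minpoly θ` is Eisenstein at `p`. So it suffices to produce, for every prime `p`, a generator whose
cubic is either Eisenstein at `p` or of discriminant prime to `p`.

Put `N = m² + 3m + 9` and `t = 2m + 3`, so that `4N = t² + 27`. A root `r` of `f_m` gives
`x = 3r − m` with `x³ = 3Nx + tN`, and `w = x² − 3N` satisfies `w³ + 3Nw² = t²N²` and `xw = tN`.
If `p ≠ 3` and `N = q³pⁱn` with `p ∤ n`, then `x / q` serves for `i = 0` (unramified) and for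
`i = 1` (Eisenstein), and `w / (pq²)` for `i = 2` (Eisenstein). At `p = 3` the generators are `r` if
`3 ∤ m`, `x / 9` if `m ≡ 12 (mod 27)` (unramified in both cases), `w / 27` for the other
`m ≡ 3 (mod 9)`, and `r − 1` for the remaining multiples of `3` (Eisenstein in both cases).
-/

open Polynomial

/-- The simplest cubic polynomial `f_m(X) = X³ − mX² − (m+3)X − 1` over `ℚ`. -/
noncomputable def f (m : ℤ) : ℚ[X] :=
  X ^ 3 - C (m : ℚ) * X ^ 2 - C ((m : ℚ) + 3) * X - 1

/-- The primes `p ≠ 3` dividing `m²+3m+9` with an exponent not congruent to `0` mod `3`. -/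
def ramifiedPrimes (m : ℤ) : Finset ℕ :=
  Finset.filter (fun p : ℕ => p ≠ 3 ∧ ¬(3 ∣ (m ^ 2 + 3 * m + 9).natAbs.factorization p))
    (m ^ 2 + 3 * m + 9).natAbs.primeFactors

/-- The conductor `𝔣_m` of the simplest cubic field `L_m`: the product of the primes `p ≠ 3`
dividing `m²+3m+9` with exponent not divisible by `3`, times `9` when `3 ∣ m` and
`m ≢ 12 (mod 27)`. -/
def frakf (m : ℤ) : ℤ :=
  (if 3 ∣ m ∧ m % 27 ≠ 12 then 9 else 1) * ∏ p ∈ ramifiedPrimes m, (p : ℤ)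

open Module IntermediateField
open NumberField (RingOfIntegers)
open scoped NumberField

section PowerBasis

theorem exists_powerBasis_gen_eq {F L : Type*} [Field F] [Field L] [Algebra F L] {x : L}
    (hx : IsIntegral F x) (htop : F⟮x⟯ = ⊤) : ∃ B : PowerBasis F L, B.gen = x :=
  ⟨.ofAdjoinEqTop hx (Algebra.adjoin_eq_top_of_primitive_element hx.isAlgebraic htop), rfl⟩

variable {F L : Type*} [Field F] [Field L] [Algebra F L] [Algebra.IsSeparable F L]
  (B : PowerBasis F L)

theorem norm_aeval_gen_eq_resultant (g : F[X]) {n : ℕ} (hn : g.natDegree ≤ n) :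
    Algebra.norm F (aeval B.gen g) =
      resultant (minpoly F B.gen) g (minpoly F B.gen).natDegree n := by
  classical
  have := B.finite
  let E := AlgebraicClosure L
  have hnodup : ((minpoly F B.gen).aroots E).Nodup :=
    nodup_roots (Separable.map (Algebra.IsSeparable.isSeparable F B.gen))
  apply (algebraMap F E).injective
  rw [← resultant_map_map, ← (minpoly F B.gen).natDegree_map (algebraMap F E),
    resultant_eq_prod_eval _ _ _ (natDegree_map_le.trans hn) (IsAlgClosed.splits _),
    ((minpoly.monic B.isIntegral_gen).map _).leadingCoeff, one_pow, one_mul,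
    Algebra.norm_eq_prod_embeddings]
  calc ∏ σ : L →ₐ[F] E, σ (aeval B.gen g)
      = ∏ y : {y // y ∈ (minpoly F B.gen).aroots E}, aeval y.1 g :=
        Fintype.prod_equiv B.liftEquiv' _ _ fun σ ↦ by simp [aeval_algHom_apply]
    _ = ∏ y ∈ ((minpoly F B.gen).aroots E).toFinset, aeval y g :=
        Finset.prod_mem_multiset _ _ (fun y ↦ aeval y g) fun _ ↦ rfl
    _ = _ := by
      simp only [Finset.prod_eq_multiset_prod, Multiset.toFinset_val, hnodup.dedup,
        eval_map_algebraMap]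

theorem discr_basis_eq_discr_minpoly_gen :
    Algebra.discr F B.basis = (minpoly F B.gen).discr := by
  have := B.finite
  rw [Algebra.discr_powerBasis_eq_norm, norm_aeval_gen_eq_resultant B _ (natDegree_derivative_le _),
    resultant_deriv (minpoly.degree_pos B.isIntegral_gen),
    (minpoly.monic B.isIntegral_gen).leadingCoeff, B.finrank, B.natDegree_minpoly, mul_one,
    ← mul_assoc, ← pow_add, Even.neg_one_pow ⟨_, rfl⟩, one_mul]

end PowerBasis

theorem discr_map_of_monic {R S : Type*} [CommRing R] [CommRing S] [Nontrivial S]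
    (φ : R →+* S) {g : R[X]} (hg : g.Monic) : (g.map φ).discr = φ g.discr := by
  have := φ.domain_nontrivial
  rcases eq_or_ne g 1 with rfl | h1
  · rw [Polynomial.map_one, ← C_1, ← C_1, discr_C, discr_C, map_one]
  have hpos : 0 < g.degree := hg.degree_pos.2 h1
  have hres := congrArg φ (resultant_deriv hpos)
  have hres' := resultant_deriv (f := g.map φ) (by rwa [hg.degree_map])
  rw [derivative_map, resultant_map_map, hg.natDegree_map, hres, map_mul, map_mul, hg,
    (hg.map φ).leadingCoeff] at hres'
  simpa [(isUnit_neg_one.pow _).mul_right_inj] using hres'.symm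

section OrderIndex

theorem coe_mem_adjoin_singleton_iff {K : Type*} [Field K] {α θ : 𝓞 K} :
    (α : K) ∈ Algebra.adjoin ℤ {(θ : K)} ↔ α ∈ Algebra.adjoin ℤ {θ} := by
  have hmap := (IsScalarTower.toAlgHom ℤ (𝓞 K) K).map_adjoin_singleton θ
  rw [IsScalarTower.coe_toAlgHom'] at hmap
  rw [← hmap]
  exact Subalgebra.mem_map.trans
    ⟨fun ⟨_, hβ, h⟩ ↦ RingOfIntegers.coe_injective h ▸ hβ, fun h ↦ ⟨α, h, rfl⟩⟩

variable {K : Type*} [Field K] [NumberField K]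

/-- The index `[𝓞 K : ℤ[θ]]` of the order generated by `θ`, with value `0` when it is infinite. -/
noncomputable def orderIndex (θ : 𝓞 K) : ℕ :=
  Nat.card (𝓞 K ⧸ (Algebra.adjoin ℤ {θ}).toSubmodule)

theorem intCast_discr_eq_discr_coe {ι : Type*} [Fintype ι] [DecidableEq ι] (v : ι → 𝓞 K) :
    (Algebra.discr ℤ v : ℚ) = Algebra.discr ℚ (fun i ↦ (v i : K)) := by
  rw [Algebra.discr_def, Algebra.discr_def, Int.cast_det]
  congr 1
  ext i j
  simp [Algebra.traceMatrix_apply, Algebra.traceForm_apply, Algebra.coe_trace_int]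

theorem minpoly_coe_eq_map (θ : 𝓞 K) :
    minpoly ℚ (θ : K) = (minpoly ℤ θ).map (Int.castRingHom ℚ) := by
  rw [← NumberField.RingOfIntegers.minpoly_coe]
  exact minpoly.isIntegrallyClosed_eq_field_fractions' ℚ θ.isIntegral_coe

theorem finrank_ringOfIntegers_eq_natDegree {θ : 𝓞 K} (hθ : ℚ⟮(θ : K)⟯ = ⊤) :
    finrank ℤ (𝓞 K) = (minpoly ℤ θ).natDegree := by
  obtain ⟨B, hB⟩ := exists_powerBasis_gen_eq (.of_finite ℚ (θ : K)) hθ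
  rw [RingOfIntegers.rank, B.finrank, ← B.natDegree_minpoly, hB, minpoly_coe_eq_map,
    (minpoly.monic (RingOfIntegers.isIntegral θ)).natDegree_map]

theorem discr_pow_eq_orderIndex_sq_mul_discr {θ : 𝓞 K} (hθ : ℚ⟮(θ : K)⟯ = ⊤) :
    Algebra.discr ℤ (fun i : Fin (minpoly ℤ θ).natDegree ↦ θ ^ (i : ℕ)) =
      orderIndex θ ^ 2 * NumberField.discr K := by
  let b := finBasisOfFinrankEq ℤ (𝓞 K) (finrank_ringOfIntegers_eq_natDegree hθ)
  let bθ : Basis (Fin (minpoly ℤ θ).natDegree) ℤ (Algebra.adjoin ℤ {θ}) :=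
    (Algebra.adjoin.powerBasis' (RingOfIntegers.isIntegral θ)).basis
  have hbθ i : (bθ i : 𝓞 K) = θ ^ (i : ℕ) := by
    exact (congrArg Subtype.val
      ((Algebra.adjoin.powerBasis' (RingOfIntegers.isIntegral θ)).basis_eq_pow i)).trans (by simp)
  have hdet : (b.det fun i ↦ θ ^ (i : ℕ)).natAbs = orderIndex θ := by
    simp only [← hbθ]
    exact Submodule.natAbs_det_basis_change b (Algebra.adjoin ℤ {θ}).toSubmodule bθ
  rw [← Basis.toMatrix_map_vecMul b fun i : Fin _ ↦ θ ^ (i : ℕ), Algebra.discr_of_matrix_vecMul,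
    NumberField.discr_eq_discr K b, ← hdet, Int.natCast_natAbs, sq_abs, Basis.det_apply]

theorem discr_minpoly_eq_orderIndex_sq_mul_discr {θ : 𝓞 K} (hθ : ℚ⟮(θ : K)⟯ = ⊤) :
    (minpoly ℤ θ).discr = orderIndex θ ^ 2 * NumberField.discr K := by
  obtain ⟨B, hB⟩ := exists_powerBasis_gen_eq (.of_finite ℚ (θ : K)) hθ
  have hdim : B.dim = (minpoly ℤ θ).natDegree := by
    rw [← B.finrank, ← RingOfIntegers.rank, finrank_ringOfIntegers_eq_natDegree hθ]
  have hbasis : Algebra.discr ℚ (fun i : Fin (minpoly ℤ θ).natDegree ↦ (θ : K) ^ (i : ℕ)) =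
      Algebra.discr ℚ B.basis := by
    rw [← hdim, ← hB, B.coe_basis]
  rw [← discr_pow_eq_orderIndex_sq_mul_discr hθ, ← Int.cast_inj (α := ℚ),
    intCast_discr_eq_discr_coe]
  simp only [map_pow]
  rw [hbasis, discr_basis_eq_discr_minpoly_gen, hB, minpoly_coe_eq_map,
    discr_map_of_monic _ (minpoly.monic (RingOfIntegers.isIntegral θ)), eq_intCast]

theorem discr_minpoly_ne_zero {θ : 𝓞 K} (hθ : ℚ⟮(θ : K)⟯ = ⊤) : (minpoly ℤ θ).discr ≠ 0 := by
  obtain ⟨B, hB⟩ := exists_powerBasis_gen_eq (.of_finite ℚ (θ : K)) hθ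
  have := Algebra.discr_not_zero_of_basis ℚ B.basis
  rwa [discr_basis_eq_discr_minpoly_gen, hB, minpoly_coe_eq_map,
    discr_map_of_monic _ (minpoly.monic (RingOfIntegers.isIntegral θ)), eq_intCast,
    Int.cast_ne_zero] at this

theorem orderIndex_ne_zero {θ : 𝓞 K} (hθ : ℚ⟮(θ : K)⟯ = ⊤) : orderIndex θ ≠ 0 := fun h ↦
  discr_minpoly_ne_zero hθ <| by simp [discr_minpoly_eq_orderIndex_sq_mul_discr hθ, h]

theorem not_dvd_orderIndex_of_isEisensteinAt {θ : 𝓞 K} (hθ : ℚ⟮(θ : K)⟯ = ⊤) {p : ℕ}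
    (hp : p.Prime) (hE : (minpoly ℤ θ).IsEisensteinAt (Ideal.span {(p : ℤ)})) :
    ¬ p ∣ orderIndex θ := by
  intro hdvd
  have := Fact.mk hp
  have := Nat.finite_of_card_ne_zero (orderIndex_ne_zero hθ)
  obtain ⟨q, hq⟩ := exists_prime_addOrderOf_dvd_card' p hdvd
  obtain ⟨α, rfl⟩ := Submodule.Quotient.mk_surjective _ q
  obtain ⟨B, hB⟩ := exists_powerBasis_gen_eq (.of_finite ℚ (θ : K)) hθ
  have hα : α ∉ Algebra.adjoin ℤ {θ} := fun h ↦ hp.one_lt.ne (by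
    rw [← hq, (Submodule.Quotient.mk_eq_zero _).2 h, addOrderOf_zero])
  have hpα : (p : ℤ) • α ∈ Algebra.adjoin ℤ {θ} := by
    rw [← Subalgebra.mem_toSubmodule, ← Submodule.Quotient.mk_eq_zero, Submodule.Quotient.mk_smul,
      natCast_zsmul, ← hq, addOrderOf_nsmul_eq_zero]
  rw [← coe_mem_adjoin_singleton_iff, ← hB] at hα hpα
  rw [← RingOfIntegers.minpoly_coe, ← hB] at hE
  exact hα <| mem_adjoin_of_smul_prime_smul_of_minpoly_isEisensteinAt
    (Nat.prime_iff_prime_int.1 hp) (hB ▸ θ.isIntegral_coe) α.isIntegral_coe (by simpa using hpα) hE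

theorem padicValInt_discr_of_not_dvd_orderIndex {θ : 𝓞 K} (hθ : ℚ⟮(θ : K)⟯ = ⊤) {p : ℕ}
    (hp : p.Prime) (hndvd : ¬ p ∣ orderIndex θ) :
    padicValInt p (NumberField.discr K) = padicValInt p (minpoly ℤ θ).discr := by
  have := Fact.mk hp
  rw [discr_minpoly_eq_orderIndex_sq_mul_discr hθ,
    padicValInt.mul (by simpa using orderIndex_ne_zero hθ) (NumberField.discr_ne_zero K),
    ← Nat.cast_pow, padicValInt.of_nat,
    padicValNat.eq_zero_of_not_dvd fun h ↦ hndvd (hp.dvd_of_dvd_pow h), zero_add]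

theorem exists_minpoly_eq_of_aeval_eq_zero {g : ℤ[X]} (hg : g.Monic)
    (hdeg : g.natDegree = finrank ℚ K) {z : K} (hz : aeval z g = 0) (htop : ℚ⟮z⟯ = ⊤) :
    ∃ θ : 𝓞 K, (θ : K) = z ∧ minpoly ℤ θ = g := by
  let θ : 𝓞 K := ⟨z, g, hg, hz⟩
  have hθ : aeval θ g = 0 := RingOfIntegers.coe_injective (by
    rw [← aeval_algebraMap_apply, map_zero]; exact hz)
  have hmonic := minpoly.monic (RingOfIntegers.isIntegral θ)
  refine ⟨θ, rfl, (eq_of_monic_of_dvd_of_natDegree_le hmonic hg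
    (minpoly.isIntegrallyClosed_dvd (RingOfIntegers.isIntegral θ) hθ) ?_).symm⟩
  rw [hdeg, ← RingOfIntegers.rank, finrank_ringOfIntegers_eq_natDegree (θ := θ) htop]

end OrderIndex

section Cubic

variable {K : Type*} [Field K] [NumberField K]

theorem discr_cubic_toPoly {R : Type*} [CommRing R] [Nontrivial R] {P : Cubic R}
    (ha : P.a = 1) : P.toPoly.discr = P.discr := by
  rw [discr_of_degree_eq_three (Cubic.degree_of_a_ne_zero (ha ▸ one_ne_zero)), Cubic.discr]
  simp

theorem isEisensteinAt_cubic_toPoly {R : Type*} [CommRing R] {P : Cubic R} (ha : P.a = 1)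
    {p : R} (hp : ¬ IsUnit p) (hb : p ∣ P.b) (hc : p ∣ P.c) (hd : p ∣ P.d) (hd2 : ¬ p ^ 2 ∣ P.d) :
    P.toPoly.IsEisensteinAt (Ideal.span {p}) := by
  have : Nontrivial R := not_subsingleton_iff_nontrivial.1 fun _ ↦ hp (isUnit_of_subsingleton p)
  have hmonic : P.toPoly.Monic := Cubic.monic_of_a_eq_one ha
  refine ⟨?_, fun {n} hn ↦ ?_, ?_⟩
  · rw [hmonic.leadingCoeff, ← Ideal.ne_top_iff_one, Ne, Ideal.span_singleton_eq_top]
    exact hp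
  · rw [Cubic.natDegree_of_a_ne_zero (ha ▸ one_ne_zero)] at hn
    interval_cases n <;> simpa [Ideal.mem_span_singleton]
  · simpa [Ideal.span_singleton_pow, Ideal.mem_span_singleton]

variable {P : Cubic ℤ} (ha : P.a = 1) (hK : finrank ℚ K = 3) {z : K} (hz : aeval z P.toPoly = 0)
  (htop : ℚ⟮z⟯ = ⊤)
include ha hK hz htop

theorem exists_minpoly_eq_cubic_toPoly : ∃ θ : 𝓞 K, (θ : K) = z ∧ minpoly ℤ θ = P.toPoly :=
  exists_minpoly_eq_of_aeval_eq_zero (Cubic.monic_of_a_eq_one ha)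
    (by rw [Cubic.natDegree_of_a_ne_zero (ha ▸ one_ne_zero), hK]) hz htop

theorem exists_cubic_discr_eq_sq_mul_discr : ∃ n : ℕ, P.discr = n ^ 2 * NumberField.discr K := by
  obtain ⟨θ, rfl, hθ⟩ := exists_minpoly_eq_cubic_toPoly ha hK hz htop
  refine ⟨orderIndex θ, ?_⟩
  rw [← discr_cubic_toPoly ha, ← hθ, discr_minpoly_eq_orderIndex_sq_mul_discr htop]

theorem padicValInt_discr_eq_zero_of_cubic {p : ℕ} (h : ¬ (p : ℤ) ∣ P.discr) :
    padicValInt p (NumberField.discr K) = 0 := by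
  obtain ⟨n, hn⟩ := exists_cubic_discr_eq_sq_mul_discr ha hK hz htop
  exact padicValInt.eq_zero_of_not_dvd fun hd ↦ h (hn ▸ hd.mul_left _)

theorem padicValInt_discr_eq_of_cubic_eisenstein {p : ℕ} (hp : p.Prime)
    (hb : (p : ℤ) ∣ P.b) (hc : (p : ℤ) ∣ P.c) (hd : (p : ℤ) ∣ P.d) (hd2 : ¬ (p : ℤ) ^ 2 ∣ P.d) :
    padicValInt p (NumberField.discr K) = padicValInt p P.discr := by
  obtain ⟨θ, rfl, hθ⟩ := exists_minpoly_eq_cubic_toPoly ha hK hz htop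
  rw [← discr_cubic_toPoly ha, ← hθ]
  refine padicValInt_discr_of_not_dvd_orderIndex htop hp
    (not_dvd_orderIndex_of_isEisensteinAt htop hp ?_)
  rw [hθ]
  exact isEisensteinAt_cubic_toPoly ha (Nat.prime_iff_prime_int.1 hp).not_isUnit hb hc hd hd2

end Cubic

theorem adjoin_simple_eq_top_of_mem {F L : Type*} [Field F] [Field L] [Algebra F L] {x y : L}
    (hx : F⟮x⟯ = ⊤) (hxy : x ∈ F⟮y⟯) : F⟮y⟯ = ⊤ :=
  top_le_iff.1 (hx ▸ adjoin_simple_le_iff.2 hxy)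

section Valuation

variable {p : ℕ} [hp : Fact p.Prime]

theorem padicValInt_pow_mul_of_not_dvd (k : ℕ) {u : ℤ} (hu : ¬ (p : ℤ) ∣ u) :
    padicValInt p (p ^ k * u) = k := by
  rw [padicValInt.mul (by simp [hp.out.ne_zero]) (by rintro rfl; simp at hu),
    padicValInt.eq_zero_of_not_dvd hu, ← Nat.cast_pow, padicValInt.of_nat, padicValNat.prime_pow,
    add_zero]

theorem exists_eq_cube_mul_pow_mul {N : ℤ} (hN : N ≠ 0) :
    ∃ q n : ℤ, N = q ^ 3 * (p ^ (padicValInt p N % 3) * n) ∧ ¬ (p : ℤ) ∣ n := by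
  obtain ⟨n, hn⟩ := padicValInt_dvd (p := p) N
  refine ⟨p ^ (padicValInt p N / 3), n, ?_, fun ⟨n', hn'⟩ ↦ ?_⟩
  · rw [← pow_mul, ← mul_assoc, ← pow_add, mul_comm _ 3, Nat.div_add_mod, ← hn]
  · have := (padicValInt_dvd_iff (p := p) (padicValInt p N + 1) N).1
      ⟨n', by rw [pow_succ, mul_assoc, ← hn', ← hn]⟩
    omega

theorem padicValNat_prod_primes {S : Finset ℕ} (hS : ∀ q ∈ S, q.Prime) :
    padicValNat p (∏ q ∈ S, q) = if p ∈ S then 1 else 0 := by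
  rw [← Nat.factorization_def _ hp.out, Nat.factorization_prod fun q hq ↦ (hS q hq).ne_zero,
    Finset.sum_apply',
    Finset.sum_congr rfl fun q hq ↦ by rw [(hS q hq).factorization, Finsupp.single_apply]]
  exact Finset.sum_ite_eq' S p _

end Valuation

theorem eq_of_forall_padicValInt_eq {a b : ℤ} (ha : 0 < a) (hb : 0 < b)
    (h : ∀ p : ℕ, p.Prime → padicValInt p a = padicValInt p b) : a = b := by
  rw [← Int.natAbs_inj_of_nonneg_of_nonneg ha.le hb.le]
  exact (Nat.eq_iff_prime_padicValNat_eq _ _ (by omega) (by omega)).2 h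

theorem aeval_cubic_toPoly {A : Type*} [Ring A] (P : Cubic ℤ) (z : A) :
    aeval z P.toPoly = P.a * z ^ 3 + P.b * z ^ 2 + P.c * z + P.d := by
  simp [Cubic.toPoly]

section DepressedCubic

variable {N t : ℤ}

section Generators

variable {K : Type*} [Field K] [CharZero K] {x : K} (hx : x ^ 3 = 3 * N * x + t * N)
  (htop : ℚ⟮x⟯ = ⊤)
include hx htop

theorem exists_root_of_scaled {a c d : ℤ} (hc : c ≠ 0) (ha : 3 * N = c ^ 2 * a)
    (hd : t * N = c ^ 3 * d) :
    ∃ z : K, aeval z (Cubic.mk 1 0 (-a) (-d)).toPoly = 0 ∧ ℚ⟮z⟯ = ⊤ := by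
  have hcK : (c : K) ≠ 0 := by exact_mod_cast hc
  have haK : 3 * (N : K) = c ^ 2 * a := by exact_mod_cast ha
  have hdK : (t : K) * N = c ^ 3 * d := by exact_mod_cast hd
  obtain ⟨z, rfl⟩ : ∃ z, x = c * z := ⟨x / c, (mul_div_cancel₀ x hcK).symm⟩
  refine ⟨z, ?_, adjoin_simple_eq_top_of_mem htop
    (mul_mem (intCast_mem _ c) (mem_adjoin_simple_self ℚ z))⟩
  rw [aeval_cubic_toPoly]
  push_cast
  apply mul_left_cancel₀ (pow_ne_zero 3 hcK)
  linear_combination hx + c * z * haK + hdK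

theorem exists_root_of_shifted_square {a c d : ℤ} (hc : c ≠ 0) (hd0 : d ≠ 0) (ha : N = c * a)
    (hd : t ^ 2 * N ^ 2 = c ^ 3 * d) :
    ∃ v : K, aeval v (Cubic.mk 1 (3 * a) 0 (-d)).toPoly = 0 ∧ ℚ⟮v⟯ = ⊤ := by
  have hcK : (c : K) ≠ 0 := by exact_mod_cast hc
  have haK : (N : K) = c * a := by exact_mod_cast ha
  have hdK : (t : K) ^ 2 * N ^ 2 = c ^ 3 * d := by exact_mod_cast hd
  obtain ⟨v, hv⟩ : ∃ v, x ^ 2 - 3 * N = c * v :=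
    ⟨_, (mul_div_cancel₀ (x ^ 2 - 3 * N) hcK).symm⟩
  have hxv : x * (c * v) = t * N := by linear_combination hx - x * hv
  have hcubic : v ^ 3 + 3 * a * v ^ 2 = d := by
    apply mul_left_cancel₀ (pow_ne_zero 3 hcK)
    linear_combination (x * (c * v) + t * N) * hxv + hdK - 3 * c ^ 2 * v ^ 2 * haK
      - c ^ 2 * v ^ 2 * hv
  have hv0 : v ≠ 0 := by
    rintro rfl
    exact hd0 (by simpa using hcubic.symm)
  refine ⟨v, ?_, adjoin_simple_eq_top_of_mem htop ?_⟩
  · rw [aeval_cubic_toPoly]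
    push_cast
    linear_combination hcubic
  · rw [eq_div_of_mul_eq (mul_ne_zero hcK hv0) hxv]
    exact div_mem (mul_mem (intCast_mem _ t) (intCast_mem _ N))
      (mul_mem (intCast_mem _ c) (mem_adjoin_simple_self ℚ v))

end Generators

theorem not_intCast_dvd_three {p : ℕ} (hp : p.Prime) (hp3 : p ≠ 3) : ¬ (p : ℤ) ∣ 3 := fun h ↦
  hp3 ((Nat.prime_dvd_prime_iff_eq hp Nat.prime_three).1 (by exact_mod_cast h))

theorem not_dvd_of_dvd_of_four_mul_eq {p : ℕ} (hp : p.Prime) (hp3 : p ≠ 3)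
    (hNt : 4 * N = t ^ 2 + 27) (hpN : (p : ℤ) ∣ N) : ¬ (p : ℤ) ∣ t := by
  intro hpt
  have h27 : (p : ℤ) ∣ 3 ^ 3 := by
    rw [show (3 : ℤ) ^ 3 = 4 * N - t ^ 2 by rw [hNt]; ring]
    exact (hpN.mul_left 4).sub (hpt.pow two_ne_zero)
  exact not_intCast_dvd_three hp hp3 ((Nat.prime_iff_prime_int.1 hp).dvd_of_dvd_pow h27)

section PrimeNeThree

variable {K : Type*} [Field K] [NumberField K] {x : K} (hK : finrank ℚ K = 3)
  (hx : x ^ 3 = 3 * N * x + t * N) (htop : ℚ⟮x⟯ = ⊤)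
  (hNt : 4 * N = t ^ 2 + 27) {p : ℕ} (hp : p.Prime) (hp3 : p ≠ 3) {q n : ℤ} (hq : q ≠ 0)
  (hn : ¬ (p : ℤ) ∣ n)
include hK hx htop hNt hp hp3 hq hn

theorem padicValInt_discr_of_eq_cube_mul (hN : N = q ^ 3 * n) :
    padicValInt p (NumberField.discr K) = 0 := by
  obtain ⟨z, hz, hztop⟩ := exists_root_of_scaled (a := 3 * (q * n)) (d := t * n) hx htop hq
    (by rw [hN]; ring) (by rw [hN]; ring)
  have hdiscr : Cubic.discr ⟨1, 0, -(3 * (q * n)), -(t * n)⟩ = 3 ^ 6 * n ^ 2 := by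
    simp only [Cubic.discr]
    linear_combination 27 * n ^ 2 * hNt - 108 * n ^ 2 * hN
  refine padicValInt_discr_eq_zero_of_cubic rfl hK hz hztop ?_
  rw [hdiscr]
  have hpZ := Nat.prime_iff_prime_int.1 hp
  exact hpZ.not_dvd_mul (mt hpZ.dvd_of_dvd_pow (not_intCast_dvd_three hp hp3))
    (mt hpZ.dvd_of_dvd_pow hn)

theorem padicValInt_discr_of_eq_cube_mul_prime_mul (hN : N = q ^ 3 * (p * n)) :
    padicValInt p (NumberField.discr K) = 2 := by
  have hpZ := Nat.prime_iff_prime_int.1 hp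
  have hpN : (p : ℤ) ∣ N := hN ▸ (dvd_mul_right _ n).mul_left _
  have hpt := not_dvd_of_dvd_of_four_mul_eq hp hp3 hNt hpN
  obtain ⟨z, hz, hztop⟩ := exists_root_of_scaled (a := p * (3 * (q * n))) (d := p * (t * n)) hx htop
    hq (by rw [hN]; ring) (by rw [hN]; ring)
  have hdiscr : Cubic.discr ⟨1, 0, -(p * (3 * (q * n))), -(p * (t * n))⟩ =
      p ^ 2 * (3 ^ 6 * n ^ 2) := by
    simp only [Cubic.discr]
    linear_combination 27 * p ^ 2 * n ^ 2 * hNt - 108 * p ^ 2 * n ^ 2 * hN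
  rw [padicValInt_discr_eq_of_cubic_eisenstein rfl hK hz hztop hp (dvd_zero _)
    (dvd_mul_right _ _).neg_right (dvd_mul_right _ _).neg_right, hdiscr]
  · have := Fact.mk hp
    exact padicValInt_pow_mul_of_not_dvd 2 (hpZ.not_dvd_mul
      (mt hpZ.dvd_of_dvd_pow (not_intCast_dvd_three hp hp3)) (mt hpZ.dvd_of_dvd_pow hn))
  · rw [dvd_neg, sq, mul_dvd_mul_iff_left hpZ.ne_zero]
    exact hpZ.not_dvd_mul hpt hn

theorem padicValInt_discr_of_eq_cube_mul_sq_mul (hN : N = q ^ 3 * (p ^ 2 * n)) :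
    padicValInt p (NumberField.discr K) = 2 := by
  have hpZ := Nat.prime_iff_prime_int.1 hp
  have hpN : (p : ℤ) ∣ N := hN ▸ ((dvd_pow_self _ two_ne_zero).mul_right n).mul_left _
  have hpt := not_dvd_of_dvd_of_four_mul_eq hp hp3 hNt hpN
  have hu : ¬ (p : ℤ) ∣ t ^ 2 * n ^ 2 :=
    hpZ.not_dvd_mul (mt hpZ.dvd_of_dvd_pow hpt) (mt hpZ.dvd_of_dvd_pow hn)
  obtain ⟨v, hv, hvtop⟩ := exists_root_of_shifted_square (a := p * (q * n))
    (c := p * q ^ 2) (d := p * (t ^ 2 * n ^ 2)) hx htop (mul_ne_zero hpZ.ne_zero (pow_ne_zero 2 hq))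
    (mul_ne_zero hpZ.ne_zero fun h ↦ hu (h ▸ dvd_zero _)) (by rw [hN]; ring) (by rw [hN]; ring)
  have hdiscr : Cubic.discr ⟨1, 3 * (p * (q * n)), 0, -(p * (t ^ 2 * n ^ 2))⟩ =
      p ^ 2 * (3 ^ 6 * (t ^ 2 * n ^ 2 * n ^ 2)) := by
    simp only [Cubic.discr]
    linear_combination 27 * p ^ 2 * t ^ 2 * n ^ 4 * hNt - 108 * p ^ 2 * t ^ 2 * n ^ 4 * hN
  rw [padicValInt_discr_eq_of_cubic_eisenstein rfl hK hv hvtop hp ((dvd_mul_right _ _).mul_left 3)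
    (dvd_zero _) (dvd_mul_right _ _).neg_right, hdiscr]
  · have := Fact.mk hp
    exact padicValInt_pow_mul_of_not_dvd 2 (hpZ.not_dvd_mul
      (mt hpZ.dvd_of_dvd_pow (not_intCast_dvd_three hp hp3))
      (hpZ.not_dvd_mul hu (mt hpZ.dvd_of_dvd_pow hn)))
  · rw [dvd_neg, sq, mul_dvd_mul_iff_left hpZ.ne_zero]
    exact hu

end PrimeNeThree

theorem padicValInt_discr_of_ne_three {K : Type*} [Field K] [NumberField K] {x : K}
    (hK : finrank ℚ K = 3) (hx : x ^ 3 = 3 * N * x + t * N) (htop : ℚ⟮x⟯ = ⊤)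
    (hNt : 4 * N = t ^ 2 + 27) {p : ℕ} (hp : p.Prime) (hp3 : p ≠ 3) :
    padicValInt p (NumberField.discr K) = if 3 ∣ padicValInt p N then 0 else 2 := by
  have := Fact.mk hp
  have hN0 : N ≠ 0 := by rintro rfl; nlinarith [sq_nonneg t]
  obtain ⟨q, n, hN, hn⟩ := exists_eq_cube_mul_pow_mul (p := p) hN0
  have hq : q ≠ 0 := by rintro rfl; exact hN0 (by simpa using hN)
  simp only [Nat.dvd_iff_mod_eq_zero]
  have hlt : padicValInt p N % 3 < 3 := Nat.mod_lt _ three_pos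
  generalize padicValInt p N % 3 = i at hN hlt ⊢
  interval_cases i
  · exact padicValInt_discr_of_eq_cube_mul hK hx htop hNt hp hp3 hq hn (by rw [hN]; ring)
  · exact padicValInt_discr_of_eq_cube_mul_prime_mul hK hx htop hNt hp hp3 hq hn (by rw [hN]; ring)
  · exact padicValInt_discr_of_eq_cube_mul_sq_mul hK hx htop hNt hp hp3 hq hn hN

end DepressedCubic

section SimplestCubic

/-- The simplest cubic as an integral polynomial; `f m` is its image over `ℚ`. -/
def simplestCubic (m : ℤ) : Cubic ℤ := ⟨1, -m, -(m + 3), -1⟩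

theorem map_toPoly_simplestCubic (m : ℤ) :
    (simplestCubic m).toPoly.map (Int.castRingHom ℚ) = f m := by
  simp only [simplestCubic, Cubic.toPoly, f, eq_intCast, map_intCast, map_add, C_ofNat,
    Int.cast_one, Int.cast_neg, Int.cast_add, Int.cast_ofNat, Polynomial.map_add,
    Polynomial.map_mul, Polynomial.map_neg, Polynomial.map_pow, Polynomial.map_one,
    Polynomial.map_intCast, Polynomial.map_ofNat, map_X]
  ring

theorem discr_simplestCubic (m : ℤ) : (simplestCubic m).discr = (m ^ 2 + 3 * m + 9) ^ 2 := by
  simp only [Cubic.discr, simplestCubic]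
  ring

theorem aeval_f {A : Type*} [CommRing A] [Algebra ℚ A] (m : ℤ) (r : A) :
    aeval r (f m) = r ^ 3 - m * r ^ 2 - (m + 3) * r - 1 := by
  simp [f, map_ofNat]

theorem aeval_toPoly_simplestCubic {A : Type*} [CommRing A] [Algebra ℚ A] (m : ℤ) (r : A) :
    aeval r (simplestCubic m).toPoly = aeval r (f m) := by
  rw [← map_toPoly_simplestCubic]
  exact (aeval_map_algebraMap ℚ r _).symm

theorem monic_toPoly_simplestCubic (m : ℤ) : (simplestCubic m).toPoly.Monic :=
  Cubic.monic_of_a_eq_one rfl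

theorem natDegree_toPoly_simplestCubic (m : ℤ) : (simplestCubic m).toPoly.natDegree = 3 :=
  Cubic.natDegree_of_a_ne_zero one_ne_zero

theorem eval_toPoly_simplestCubic_ne_zero (m z : ℤ) : (simplestCubic m).toPoly.eval z ≠ 0 := by
  intro h
  have hmod : ∀ a b : ZMod 2, b ^ 3 - a * b ^ 2 - (a + 3) * b - 1 ≠ 0 := by decide
  apply hmod m z
  rw [← coe_aeval_eq_eval, aeval_cubic_toPoly] at h
  have h2 := congrArg (Int.cast : ℤ → ZMod 2) h
  push_cast [simplestCubic] at h2
  linear_combination h2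

theorem irreducible_f (m : ℤ) : Irreducible (f m) := by
  have hmonic := monic_toPoly_simplestCubic m
  have hdeg := natDegree_toPoly_simplestCubic m
  rw [← map_toPoly_simplestCubic]
  apply (hmonic.irreducible_iff_irreducible_map_fraction_map (K := ℚ)).1
  rw [hmonic.irreducible_iff_roots_eq_zero_of_degree_le_three (by omega) (by omega)]
  exact Multiset.eq_zero_of_forall_notMem fun z hz ↦
    eval_toPoly_simplestCubic_ne_zero m z (mem_roots'.1 hz).2

theorem exists_aeval_f_eq_zero (m : ℤ) (K : Type*) [Field K] [Algebra ℚ K]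
    [IsSplittingField ℚ K (f m)] : ∃ r : K, aeval r (f m) = 0 := by
  have hdeg : ((f m).map (algebraMap ℚ K)).degree ≠ 0 :=
    degree_map (f m) (algebraMap ℚ K) ▸ (irreducible_f m).degree_pos.ne'
  simpa only [eval_map_algebraMap] using (IsSplittingField.splits K (f m)).exists_eval_eq_zero hdeg

section Root

variable {m : ℤ} {K : Type*} [Field K] [Algebra ℚ K] {r : K} (hr : aeval r (f m) = 0)
include hr

theorem finrank_eq_three_of_aeval_f_eq_zero (htop : ℚ⟮r⟯ = ⊤) : finrank ℚ K = 3 := by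
  have hmonic : (f m).Monic := map_toPoly_simplestCubic m ▸ (monic_toPoly_simplestCubic m).map _
  rw [← finrank_top', ← htop, adjoin.finrank ⟨f m, hmonic, hr⟩,
    ← minpoly.eq_of_irreducible_of_monic (irreducible_f m) hr hmonic, ← map_toPoly_simplestCubic,
    (monic_toPoly_simplestCubic m).natDegree_map, natDegree_toPoly_simplestCubic]

theorem mem_adjoin_root_f {y : K} (hy : aeval y (f m) = 0) : y ∈ ℚ⟮r⟯ := by
  rw [aeval_f] at hr hy
  have hr0 : r ≠ 0 := by rintro rfl; simp at hr
  have hr1 : 1 + r ≠ 0 := fun h ↦ one_ne_zero (α := K) (by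
    linear_combination hr - (r ^ 2 - (m + 1) * r - 2) * h)
  -- The conjugates of `r` are `-1 / (1 + r)` and `-(1 + r) / r`.
  have hprod : (y - r) * ((1 + r) * y + 1) * (r * y + (1 + r)) = 0 := by
    linear_combination r * (1 + r) * hy - (y ^ 2 + y) * hr
  have hrmem := mem_adjoin_simple_self ℚ r
  rcases mul_eq_zero.1 hprod with h | h
  · rcases mul_eq_zero.1 h with h | h
    · rwa [sub_eq_zero.1 h]
    · rw [show y = -1 / (1 + r) by rw [eq_div_iff hr1]; linear_combination h]
      exact div_mem (neg_mem (one_mem _)) (add_mem (one_mem _) hrmem)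
  · rw [show y = -(1 + r) / r by rw [eq_div_iff hr0]; linear_combination h]
    exact div_mem (neg_mem (add_mem (one_mem _) hrmem)) hrmem

theorem adjoin_root_f_eq_top [IsSplittingField ℚ K (f m)] : ℚ⟮r⟯ = ⊤ := by
  rw [← top_le_iff, ← IntermediateField.toSubalgebra_le_toSubalgebra, top_toSubalgebra,
    ← IsSplittingField.adjoin_rootSet K (f m), Algebra.adjoin_le_iff]
  exact fun y hy ↦ mem_adjoin_root_f hr (mem_rootSet.1 hy).2

theorem three_mul_root_sub_pow_three : (3 * r - m) ^ 3 =
    3 * (m ^ 2 + 3 * m + 9 : ℤ) * (3 * r - m) + (2 * m + 3 : ℤ) * (m ^ 2 + 3 * m + 9 : ℤ) := by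
  rw [aeval_f] at hr
  push_cast
  linear_combination 27 * hr

end Root

theorem adjoin_three_mul_sub_eq_top {K : Type*} [Field K] [Algebra ℚ K] {r : K} (m : ℤ)
    (htop : ℚ⟮r⟯ = ⊤) : ℚ⟮3 * r - m⟯ = ⊤ := by
  have := algebraRat.charZero K
  refine adjoin_simple_eq_top_of_mem htop ?_
  have hmem : (3 * r - m + m) / 3 ∈ ℚ⟮3 * r - m⟯ :=
    div_mem (add_mem (mem_adjoin_simple_self ℚ _) (intCast_mem _ m)) (ofNat_mem _ 3)
  rwa [sub_add_cancel, mul_div_cancel_left₀ r three_ne_zero] at hmem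

section Discriminant

variable {m : ℤ} {K : Type*} [Field K] [NumberField K] {r : K} (hr : aeval r (f m) = 0)
  (htop : ℚ⟮r⟯ = ⊤)
include hr htop

theorem padicValInt_three_discr_of_not_dvd (hm : ¬ 3 ∣ m) :
    padicValInt 3 (NumberField.discr K) = 0 := by
  refine padicValInt_discr_eq_zero_of_cubic (P := simplestCubic m) rfl
    (finrank_eq_three_of_aeval_f_eq_zero hr htop) (by rwa [aeval_toPoly_simplestCubic]) htop ?_
  rw [discr_simplestCubic]
  refine mt Int.prime_three.dvd_of_dvd_pow fun h ↦ hm (Int.prime_three.dvd_of_dvd_pow (n := 2) ?_)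
  omega

theorem padicValInt_three_discr_of_mod_eq (hm : m % 27 = 12) :
    padicValInt 3 (NumberField.discr K) = 0 := by
  obtain ⟨j, rfl⟩ : ∃ j, m = 12 + 27 * j := ⟨m / 27, by omega⟩
  obtain ⟨z, hz, hztop⟩ := exists_root_of_scaled (c := 9) (a := 27 * j ^ 2 + 27 * j + 7)
    (d := (2 * j + 1) * (27 * j ^ 2 + 27 * j + 7)) (three_mul_root_sub_pow_three hr)
    (adjoin_three_mul_sub_eq_top _ htop) (by norm_num) (by ring) (by ring)
  refine padicValInt_discr_eq_zero_of_cubic rfl (finrank_eq_three_of_aeval_f_eq_zero hr htop)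
    hz hztop ?_
  have hdiscr : Cubic.discr ⟨1, 0, -(27 * j ^ 2 + 27 * j + 7),
      -((2 * j + 1) * (27 * j ^ 2 + 27 * j + 7))⟩ = (27 * j ^ 2 + 27 * j + 7) ^ 2 := by
    simp only [Cubic.discr]
    ring
  rw [hdiscr]
  exact mt Int.prime_three.dvd_of_dvd_pow (by omega)

theorem padicValInt_three_discr_of_not_dvd_sub_one {k : ℤ} (hmk : m = 3 * k)
    (hk : ¬ 3 ∣ k - 1) : padicValInt 3 (NumberField.discr K) = 4 := by
  have hz : aeval (r - 1) (Cubic.mk 1 (3 - m) (-(3 * m)) (-(2 * m + 3))).toPoly = 0 := by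
    rw [aeval_f] at hr
    rw [aeval_cubic_toPoly]
    push_cast
    linear_combination hr
  have hztop : ℚ⟮r - 1⟯ = ⊤ := adjoin_simple_eq_top_of_mem htop (by
    simpa using add_mem (mem_adjoin_simple_self ℚ (r - 1)) (one_mem ℚ⟮r - 1⟯))
  have hdiscr : Cubic.discr ⟨1, 3 - m, -(3 * m), -(2 * m + 3)⟩ =
      (3 : ℕ) ^ 4 * (k ^ 2 + k + 1) ^ 2 := by
    subst hmk
    simp only [Cubic.discr]
    ring
  rw [padicValInt_discr_eq_of_cubic_eisenstein rfl
    (finrank_eq_three_of_aeval_f_eq_zero hr htop) hz hztop Nat.prime_three, hdiscr]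
  · refine padicValInt_pow_mul_of_not_dvd 4 (mt Int.prime_three.dvd_of_dvd_pow fun h ↦ hk ?_)
    apply Int.prime_three.dvd_of_dvd_pow (n := 2)
    rw [show (k - 1) ^ 2 = k ^ 2 + k + 1 - 3 * k by ring]
    exact dvd_sub h (dvd_mul_right 3 k)
  all_goals dsimp only; omega

theorem padicValInt_three_discr_of_not_dvd_two_mul_add_one {j : ℤ} (hmj : m = 9 * j + 3)
    (hj : ¬ 3 ∣ 2 * j + 1) : padicValInt 3 (NumberField.discr K) = 4 := by
  subst hmj
  let n := 3 * j ^ 2 + 3 * j + 1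
  have hn : ¬ 3 ∣ n := by omega
  have hu : ¬ 3 ∣ n ^ 2 * (2 * j + 1) ^ 2 := Int.prime_three.not_dvd_mul
    (mt Int.prime_three.dvd_of_dvd_pow hn) (mt Int.prime_three.dvd_of_dvd_pow hj)
  obtain ⟨v, hv, hvtop⟩ := exists_root_of_shifted_square (c := 27) (a := n)
    (d := 3 * (n ^ 2 * (2 * j + 1) ^ 2)) (three_mul_root_sub_pow_three hr)
    (adjoin_three_mul_sub_eq_top _ htop) (by norm_num) (by omega) (by ring) (by ring)
  have hdiscr : Cubic.discr ⟨1, 3 * n, 0, -(3 * (n ^ 2 * (2 * j + 1) ^ 2))⟩ =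
      (3 : ℕ) ^ 4 * (n ^ 2 * (n ^ 2 * (2 * j + 1) ^ 2)) := by
    simp only [Cubic.discr]
    ring
  rw [padicValInt_discr_eq_of_cubic_eisenstein rfl
    (finrank_eq_three_of_aeval_f_eq_zero hr htop) hv hvtop Nat.prime_three
    (dvd_mul_right 3 n) (dvd_zero _) (dvd_mul_right 3 _).neg_right, hdiscr]
  · exact padicValInt_pow_mul_of_not_dvd 4 (Int.prime_three.not_dvd_mul
      (mt Int.prime_three.dvd_of_dvd_pow hn) hu)
  · dsimp only; omega

theorem padicValInt_three_discr :
    padicValInt 3 (NumberField.discr K) = if 3 ∣ m ∧ m % 27 ≠ 12 then 4 else 0 := by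
  split_ifs with hm
  · by_cases hk : 3 ∣ m / 3 - 1
    · exact padicValInt_three_discr_of_not_dvd_two_mul_add_one hr htop (j := m / 9) (by omega)
        (by omega)
    · exact padicValInt_three_discr_of_not_dvd_sub_one hr htop (k := m / 3) (by omega) hk
  · by_cases h3 : 3 ∣ m
    · exact padicValInt_three_discr_of_mod_eq hr htop (by omega)
    · exact padicValInt_three_discr_of_not_dvd hr htop h3

theorem discr_pos_of_aeval_f_eq_zero : 0 < NumberField.discr K := by
  obtain ⟨n, hn⟩ := exists_cubic_discr_eq_sq_mul_discr (P := simplestCubic m) rfl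
    (finrank_eq_three_of_aeval_f_eq_zero hr htop) (by rwa [aeval_toPoly_simplestCubic]) htop
  rw [discr_simplestCubic] at hn
  have hN : 0 < m ^ 2 + 3 * m + 9 := by nlinarith [sq_nonneg (2 * m + 3)]
  exact pos_of_mul_pos_right (hn ▸ pow_pos hN 2) (sq_nonneg _)

end Discriminant

section Conductor

theorem mem_ramifiedPrimes_iff {m : ℤ} {p : ℕ} (hp : p.Prime) :
    p ∈ ramifiedPrimes m ↔ p ≠ 3 ∧ ¬ 3 ∣ padicValInt p (m ^ 2 + 3 * m + 9) := by
  rw [ramifiedPrimes, Finset.mem_filter, ← Nat.support_factorization, Finsupp.mem_support_iff,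
    Nat.factorization_def _ hp, ← padicValInt, and_iff_right_iff_imp]
  exact fun h h0 ↦ h.2 (h0 ▸ dvd_zero 3)

variable (m : ℤ)

theorem prime_of_mem_ramifiedPrimes {p : ℕ} (hp : p ∈ ramifiedPrimes m) : p.Prime :=
  Nat.prime_of_mem_primeFactors (Finset.mem_filter.1 hp).1

theorem frakf_pos : 0 < frakf m := by
  refine mul_pos (by split_ifs <;> norm_num) (Finset.prod_pos fun p hp ↦ ?_)
  exact_mod_cast (prime_of_mem_ramifiedPrimes m hp).pos

theorem padicValInt_frakf {p : ℕ} (hp : p.Prime) :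
    padicValInt p (frakf m) = padicValInt p (if 3 ∣ m ∧ m % 27 ≠ 12 then 9 else 1) +
      if p ∈ ramifiedPrimes m then 1 else 0 := by
  have := Fact.mk hp
  have h := frakf_pos m
  rw [frakf, padicValInt.mul (left_ne_zero_of_mul h.ne') (right_ne_zero_of_mul h.ne'),
    ← Nat.cast_prod, padicValInt.of_nat,
    padicValNat_prod_primes fun q ↦ prime_of_mem_ramifiedPrimes m]

theorem padicValInt_frakf_of_ne_three {p : ℕ} (hp : p.Prime) (hp3 : p ≠ 3) :
    padicValInt p (frakf m) = if 3 ∣ padicValInt p (m ^ 2 + 3 * m + 9) then 0 else 1 := by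
  have h9 : ¬ (p : ℤ) ∣ 3 ^ 2 :=
    mt (Nat.prime_iff_prime_int.1 hp).dvd_of_dvd_pow (not_intCast_dvd_three hp hp3)
  have hfactor : padicValInt p (if 3 ∣ m ∧ m % 27 ≠ 12 then 9 else 1) = 0 := by
    split_ifs
    exacts [padicValInt.eq_zero_of_not_dvd h9, padicValInt.one]
  rw [padicValInt_frakf m hp, hfactor, zero_add]
  simp only [mem_ramifiedPrimes_iff hp, hp3, ne_eq, not_false_eq_true, true_and, ite_not]

theorem padicValInt_three_frakf :
    padicValInt 3 (frakf m) = if 3 ∣ m ∧ m % 27 ≠ 12 then 2 else 0 := by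
  have h9 : padicValInt 3 9 = 2 :=
    padicValInt_pow_mul_of_not_dvd (p := 3) 2 (u := 1) (by norm_num)
  rw [padicValInt_frakf m Nat.prime_three,
    if_neg fun h ↦ ((mem_ramifiedPrimes_iff Nat.prime_three).1 h).1 rfl, add_zero,
    apply_ite (padicValInt 3), h9, padicValInt.one]

end Conductor

theorem padicValInt_discr_eq_two_mul_padicValInt_frakf {m : ℤ} {K : Type*} [Field K]
    [NumberField K] {r : K} (hr : aeval r (f m) = 0) (htop : ℚ⟮r⟯ = ⊤) {p : ℕ} (hp : p.Prime) :
    padicValInt p (NumberField.discr K) = 2 * padicValInt p (frakf m) := by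
  rcases eq_or_ne p 3 with rfl | hp3
  · rw [padicValInt_three_discr hr htop, padicValInt_three_frakf]
    split_ifs <;> rfl
  · rw [padicValInt_discr_of_ne_three (finrank_eq_three_of_aeval_f_eq_zero hr htop)
      (three_mul_root_sub_pow_three hr) (adjoin_three_mul_sub_eq_top _ htop) (by ring) hp hp3,
      padicValInt_frakf_of_ne_three m hp hp3]
    split_ifs <;> rfl

end SimplestCubic

theorem stmt7 (m : ℤ) (K : Type*) [Field K] [NumberField K]
    (hK : IsSplittingField ℚ K (f m)) :
    NumberField.discr K = frakf m ^ 2 := by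
  obtain ⟨r, hr⟩ := exists_aeval_f_eq_zero m K
  have htop : ℚ⟮r⟯ = ⊤ := adjoin_root_f_eq_top hr
  have hfrakf := frakf_pos m
  refine eq_of_forall_padicValInt_eq (discr_pos_of_aeval_f_eq_zero hr htop) (pow_pos hfrakf 2)
    fun p hp ↦ ?_
  have := Fact.mk hp
  rw [padicValInt_discr_eq_two_mul_padicValInt_frakf hr htop hp, sq,
    padicValInt.mul hfrakf.ne' hfrakf.ne', two_mul]
end

section
/- Let F(X,Y) ∈ ℤ[X,Y] be an irreducible binary cubic form with positive discriminant D(F). Suppose the automorphism group Aut(F) = {A ∈ GL₂(ℤ) : F(A·(X,Y)) = F(X,Y)} is nontrivial. If D(F) ≥ 2.56·10¹⁸, then the number of pairs (x,y) ∈ ℤ² with F(x,y) = 1 is either 0 or 3. -/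
/-- The binary cubic form with coefficients `a, b, c, d`. -/
def cubicForm (a b c d : ℤ) (x y : ℤ) : ℤ :=
  a * x ^ 3 + b * x ^ 2 * y + c * x * y ^ 2 + d * y ^ 3

/-- The discriminant of the binary cubic form `aX³ + bX²Y + cXY² + dY³`. -/
def cubicDisc (a b c d : ℤ) : ℤ :=
  18 * a * b * c * d - 4 * b ^ 3 * d + b ^ 2 * c ^ 2 - 4 * a * c ^ 3 - 27 * a ^ 2 * d ^ 2

/-!
In a suitable basis of `ℤ²` a nontrivial automorphism of `F` has order three and acts as
multiplication by `ω` on `ℤ[ω]`. The form is then `a x³ + b x² y - (b + 3 a) x y² + a y³`, and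
`F = 1` becomes the Thue equation `β - conj β = 3 √-3` for `β = A ξ³`, with `ξ = x + y ω` and
`A = 3 a + b + 3 a ω`, where `‖A‖⁴ = D(F)`. For two solutions `ξ₀`, `ξ` with `‖ξ₀‖ ≤ ‖ξ‖`, some
`ω ^ j * ξ` has the property that `w / conj w`, where `w = ω ^ j * ξ * conj ξ₀`, is very close to
the principal cube root of `conj β₀ / β₀`. The diagonal Padé approximants to `x ^ (1 / 3)` at
`x = 1` give quotients of Eisenstein integers which are close to the same cube root. Comparing the
two produces Eisenstein integers of norm less than one, which vanish. Two consecutive Padé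
approximants differ, which rules this out unless only the constant or only the linear approximant
is available. The constant one gives `ω ^ j * ξ = ξ₀`; in the linear case `β₀ + conj β₀` is a cube
`c³` with `c ∣ 3`, which is too small. Hence the solutions form a single orbit of an automorphism
of order three.
-/

section DividedDifferences

open ComplexConjugate

variable {ι : Type*} [DecidableEq ι] {v : ι → ℝ} {s : Finset ι} {a : ι}

/-- The divided difference of `x ↦ exp (i t x)` at the nodes `v i`, `i ∈ s`, written in terms of
Lagrange's nodal weights. -/
noncomputable def expDividedDiff (v : ι → ℝ) (s : Finset ι) (t : ℝ) : ℂ :=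
  ∑ i ∈ s, ((Lagrange.nodalWeight s v i : ℝ) : ℂ) * Complex.exp ((v i * t : ℝ) * Complex.I)

lemma nodalWeight_insert_mul_sub (hv : Set.InjOn v (insert a s : Finset ι)) (ha : a ∉ s) {i : ι}
    (hi : i ∈ s) :
    Lagrange.nodalWeight (insert a s) v i * (v i - v a) = Lagrange.nodalWeight s v i := by
  have hia : i ≠ a := ne_of_mem_of_not_mem hi ha
  have hne : v i - v a ≠ 0 := fun h ↦
    hia (hv (by simp [hi]) (by simp) (sub_eq_zero.mp h))
  rw [Lagrange.nodalWeight, Lagrange.nodalWeight, Finset.erase_insert_of_ne hia.symm,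
    Finset.prod_insert (by simp [ha])]
  field_simp

lemma sum_nodalWeight_eq_zero (hv : Set.InjOn v s) (hs : 1 < s.card) :
    ∑ i ∈ s, Lagrange.nodalWeight s v i = 0 := by
  have h := Lagrange.coeff_eq_sum hv (P := 1) (by simpa using Nat.zero_lt_of_lt hs)
  rw [Polynomial.coeff_one, if_neg (by omega)] at h
  simpa [Lagrange.nodalWeight, Finset.prod_inv_distrib] using h.symm

lemma hasDerivAt_exp_mul_expDividedDiff_insert (hv : Set.InjOn v (insert a s : Finset ι))
    (ha : a ∉ s) (x : ℝ) :
    HasDerivAt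
      (fun y ↦ Complex.exp ((-(v a * y) : ℝ) * Complex.I) * expDividedDiff v (insert a s) y)
      (Complex.I * (Complex.exp ((-(v a * x) : ℝ) * Complex.I) * expDividedDiff v s x)) x := by
  have hexp (i : ι) (y : ℝ) : Complex.exp ((-(v a * y) : ℝ) * Complex.I) *
      Complex.exp ((v i * y : ℝ) * Complex.I) =
        Complex.exp (((v i - v a) * y : ℝ) * Complex.I) := by
    rw [← Complex.exp_add]; congr 1; push_cast; ring
  have hterm (i : ι) (w : ℂ) : HasDerivAt
      (fun y : ℝ ↦ w * Complex.exp (((v i - v a) * y : ℝ) * Complex.I))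
      (w * (Complex.exp (((v i - v a) * x : ℝ) * Complex.I) *
        ((v i - v a : ℝ) * Complex.I))) x := by
    have hlin : HasDerivAt (fun y : ℝ ↦ (v i - v a) * y) (v i - v a) x := by
      simpa using (hasDerivAt_id x).const_mul (v i - v a)
    exact ((hlin.ofReal_comp.mul_const Complex.I).cexp).const_mul w
  have hsum := HasDerivAt.fun_sum (u := insert a s)
    fun i _ ↦ hterm i (Lagrange.nodalWeight (insert a s) v i : ℝ)
  simp only [expDividedDiff, Finset.mul_sum, mul_left_comm (Complex.exp _), hexp]
  refine hsum.congr_deriv ?_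
  simp only [Finset.sum_insert ha, sub_self, Complex.ofReal_zero, zero_mul, mul_zero, zero_add]
  refine Finset.sum_congr rfl fun i hi ↦ ?_
  rw [← nodalWeight_insert_mul_sub hv ha hi]
  push_cast
  ring

lemma norm_exp_ofReal_mul_I_mul (x : ℝ) (z : ℂ) :
    ‖Complex.exp (x * Complex.I) * z‖ = ‖z‖ := by
  rw [norm_mul, Complex.norm_exp_ofReal_mul_I, one_mul]

lemma hasDerivAt_pow_div_factorial (n : ℕ) (x : ℝ) :
    HasDerivAt (fun y : ℝ ↦ y ^ (n + 1) / (n + 1).factorial) (x ^ n / n.factorial) x := by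
  refine ((hasDerivAt_pow (n + 1) x).div_const _).congr_deriv ?_
  rw [Nat.factorial_succ, Nat.add_sub_cancel, Nat.cast_mul]
  exact mul_div_mul_left _ _ (by positivity)

lemma norm_expDividedDiff_le_of_nonneg (hv : Set.InjOn v s) {n : ℕ} (hn : s.card = n + 1) {t : ℝ}
    (ht : 0 ≤ t) : ‖expDividedDiff v s t‖ ≤ t ^ n / n.factorial := by
  induction s using Finset.induction_on generalizing n t with
  | empty => simp at hn
  | insert a s ha ih =>
    rw [Finset.card_insert_of_notMem ha, add_left_inj] at hn
    obtain _ | n := n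
    · obtain rfl := Finset.card_eq_zero.mp hn
      simpa [expDividedDiff, Lagrange.nodalWeight] using
        (Complex.norm_exp_ofReal_mul_I (v a * t)).le
    · have hderiv := hasDerivAt_exp_mul_expDividedDiff_insert hv ha
      have hzero : expDividedDiff v (insert a s) 0 = 0 := by
        have h := sum_nodalWeight_eq_zero hv (by rw [Finset.card_insert_of_notMem ha]; omega)
        simpa [expDividedDiff] using congrArg (fun y : ℝ ↦ (y : ℂ)) h
      rw [← norm_exp_ofReal_mul_I_mul (-(v a * t))]
      refine image_norm_le_of_norm_deriv_right_le_deriv_boundary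
        (fun x _ ↦ (hderiv x).continuousAt.continuousWithinAt)
        (fun x _ ↦ (hderiv x).hasDerivWithinAt) ?_ (hasDerivAt_pow_div_factorial n) ?_
        (Set.right_mem_Icc.mpr ht)
      · simp [hzero]
      · intro x hx
        rw [norm_mul, Complex.norm_I, one_mul, norm_exp_ofReal_mul_I_mul]
        exact ih (hv.mono (by simp)) hn hx.1

theorem norm_expDividedDiff_le (hv : Set.InjOn v s) {n : ℕ} (hn : s.card = n + 1) (t : ℝ) :
    ‖expDividedDiff v s t‖ ≤ |t| ^ n / n.factorial := by
  obtain ht | ht := le_total 0 t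
  · rw [abs_of_nonneg ht]
    exact norm_expDividedDiff_le_of_nonneg hv hn ht
  · have hconj : expDividedDiff v s t = conj (expDividedDiff v s (-t)) := by
      simp [expDividedDiff, ← Complex.exp_conj]
    rw [hconj, RCLike.norm_conj, abs_of_nonpos ht]
    exact norm_expDividedDiff_le_of_nonneg hv hn (neg_nonneg.mpr ht)

end DividedDifferences

section BinomialCoefficients

open Finset

lemma ringChoose_eq_prod_div_factorial {K : Type*} [Field K] [CharZero K] [BinomialRing K] (y : K)
    (k : ℕ) : Ring.choose y k = (∏ j ∈ range k, (y - j)) / k.factorial := by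
  have hdesc : (descPochhammer ℤ k).smeval y = ∏ j ∈ range k, (y - j) := by
    induction k with
    | zero => simp
    | succ k ih =>
      rw [descPochhammer_succ_right, Polynomial.smeval_mul, ih, prod_range_succ]
      simp [Polynomial.smeval_sub, Polynomial.smeval_natCast]
  rw [eq_div_iff (by exact_mod_cast k.factorial_ne_zero), ← hdesc,
    Ring.descPochhammer_eq_factorial_smul_choose, nsmul_eq_mul, mul_comm]

lemma sum_range_choose_mul_choose {R : Type*} [CommRing R] [BinomialRing R] (x y : R) (n : ℕ) :
    ∑ i ∈ range (n + 1), Ring.choose x i * Ring.choose y (n - i) = Ring.choose (x + y) n := by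
  rw [Ring.add_choose_eq n (Commute.all x y), Nat.sum_antidiagonal_eq_sum_range_succ_mk]

lemma factorial_dvd_prod_of_isCoprime {m p : ℤ} {k : ℕ} (hmp : IsCoprime p m)
    (hm : m ∣ k.factorial) (a : ℤ) : m ∣ ∏ j ∈ range k, (a - p * j) := by
  obtain ⟨u, w, huw⟩ := hmp
  have hmod : ∏ j ∈ range k, (a - p * j) ≡ ∏ j ∈ range k, (-p * (-(u * a) + j)) [ZMOD m] :=
    Int.ModEq.prod fun j _ ↦
      Int.modEq_iff_dvd.mpr ⟨-w * a, by linear_combination a * huw⟩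
  rw [prod_mul_distrib] at hmod
  exact hmod.dvd_iff.mpr
    (dvd_mul_of_dvd_right (hm.trans (Nat.factorial_coe_dvd_prod k _)) _)

lemma exists_int_eq_pow_mul_choose_div (p : ℕ) [hp : Fact p.Prime] (a : ℤ) (k : ℕ) :
    ∃ q : ℤ, (p : ℝ) ^ (k + padicValNat p k.factorial) * Ring.choose ((a : ℝ) / p) k = q := by
  obtain ⟨m, hm⟩ : p ^ padicValNat p k.factorial ∣ k.factorial := pow_padicValNat_dvd
  have hpm : IsCoprime (p : ℤ) m := by
    rw [Nat.isCoprime_iff_coprime, hp.out.coprime_iff_not_dvd]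
    rintro ⟨l, rfl⟩
    exact pow_succ_padicValNat_not_dvd k.factorial_ne_zero ⟨l, by rwa [pow_succ, mul_assoc]⟩
  have hmdvd : (m : ℤ) ∣ k.factorial := by rw [hm]; exact_mod_cast dvd_mul_left m _
  obtain ⟨q, hq⟩ := factorial_dvd_prod_of_isCoprime hpm hmdvd a
  refine ⟨q, ?_⟩
  have hp0 : (p : ℝ) ≠ 0 := by exact_mod_cast hp.out.ne_zero
  have hprod : (p : ℝ) ^ k * ∏ j ∈ range k, ((a : ℝ) / p - j) = m * q := by
    calc (p : ℝ) ^ k * ∏ j ∈ range k, ((a : ℝ) / p - j)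
        = ∏ j ∈ range k, ((p : ℝ) * ((a : ℝ) / p - j)) := by simp [prod_mul_distrib]
      _ = ∏ j ∈ range k, ((a : ℝ) - p * j) :=
          prod_congr rfl fun j _ ↦ by rw [mul_sub, mul_div_cancel₀ _ hp0]
      _ = m * q := by exact_mod_cast hq
  have hfac : (k.factorial : ℝ) = (p : ℝ) ^ padicValNat p k.factorial * m := by
    exact_mod_cast hm
  rw [ringChoose_eq_prod_div_factorial, ← mul_div_assoc, div_eq_iff (by positivity), pow_add,
    hfac, mul_right_comm, hprod]
  ring

end BinomialCoefficients

section PadeApproximants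

open Finset

/-- The coefficient of `x ^ i` in the numerator of the `[r/r]` Padé approximant to `x ^ e` at
`x = 1`, normalised so that the coefficients add up to the central binomial coefficient. -/
noncomputable def padeCoeff (e : ℝ) (r i : ℕ) : ℝ :=
  Ring.choose (r + e) i * Ring.choose (r - e) (r - i)

/-- The numerator `pade e r` of the `[r/r]` Padé approximant to `x ^ e` at `x = 1`; the
corresponding denominator is `pade (-e) r`. -/
noncomputable def pade (e : ℝ) (r : ℕ) (x : ℂ) : ℂ :=
  ∑ i ∈ range (r + 1), (padeCoeff e r i : ℂ) * x ^ i

lemma ringChoose_natCast_add_nonneg {e : ℝ} {r i : ℕ} (he : -1 ≤ e) (hi : i ≤ r) :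
    0 ≤ Ring.choose (r + e) i := by
  rw [ringChoose_eq_prod_div_factorial]
  refine div_nonneg (prod_nonneg fun j hj ↦ ?_) (by positivity)
  have hjr : (j : ℝ) + 1 ≤ r := by exact_mod_cast (mem_range.mp hj).trans_le hi
  linarith

lemma padeCoeff_nonneg {e : ℝ} (he : |e| ≤ 1) {r i : ℕ} (hi : i ≤ r) : 0 ≤ padeCoeff e r i := by
  obtain ⟨hl, hu⟩ := abs_le.mp he
  rw [padeCoeff, sub_eq_add_neg]
  exact mul_nonneg (ringChoose_natCast_add_nonneg hl hi)
    (ringChoose_natCast_add_nonneg (by linarith) (Nat.sub_le r i))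

lemma sum_padeCoeff (e : ℝ) (r : ℕ) :
    ∑ i ∈ range (r + 1), padeCoeff e r i = (2 * r).choose r := by
  simp only [padeCoeff]
  rw [sum_range_choose_mul_choose, ← Ring.choose_natCast]
  push_cast
  ring_nf

theorem norm_pade_le {e : ℝ} (he : |e| ≤ 1) (r : ℕ) {x : ℂ} (hx : ‖x‖ ≤ 1) :
    ‖pade e r x‖ ≤ 4 ^ r := by
  calc ‖pade e r x‖ ≤ ∑ i ∈ range (r + 1), padeCoeff e r i := by
        refine norm_sum_le_of_le _ fun i hi ↦ ?_
        have hc := padeCoeff_nonneg he (Nat.lt_succ_iff.mp (mem_range.mp hi))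
        rw [norm_mul, norm_pow, Complex.norm_real, Real.norm_of_nonneg hc]
        exact mul_le_of_le_one_right hc (pow_le_one₀ (norm_nonneg x) hx)
    _ = (2 * r).choose r := sum_padeCoeff e r
    _ ≤ 4 ^ r := by
        have h := Nat.choose_le_two_pow (2 * r) r
        rw [pow_mul] at h
        exact_mod_cast h

lemma prod_erase_natCast_sub (i k : ℕ) :
    ∏ j ∈ (range (i + k + 1)).erase i, ((i : ℝ) - j) = (-1) ^ k * (i.factorial * k.factorial) := by
  have hsplit : (range (i + k + 1)).erase i =
      (range i).disjUnion ((range k).map (addLeftEmbedding (i + 1)))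
        (disjoint_left.mpr fun j hj ↦ by
          simp only [mem_map, addLeftEmbedding_apply, not_exists, not_and]
          have := mem_range.mp hj
          omega) := by
    ext j
    simp only [mem_erase, mem_range, mem_disjUnion, mem_map, addLeftEmbedding_apply]
    refine ⟨fun h ↦ or_iff_not_imp_left.mpr fun _ ↦ ⟨j - (i + 1), by omega, by omega⟩, ?_⟩
    rintro (h | ⟨l, hl, rfl⟩) <;> omega
  have hlow : ∏ j ∈ range i, ((i : ℝ) - j) = i.factorial := by
    rw [← prod_range_reflect, ← prod_range_add_one_eq_factorial, Nat.cast_prod]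
    refine prod_congr rfl fun j hj ↦ ?_
    have := mem_range.mp hj
    rw [Nat.cast_sub (by omega), Nat.cast_sub (by omega)]
    push_cast
    ring
  have hhigh : ∏ j ∈ range k, ((i : ℝ) - (i + 1 + j : ℕ)) = (-1) ^ k * k.factorial := by
    rw [← prod_range_add_one_eq_factorial, Nat.cast_prod, ← card_range k, ← prod_const,
      card_range, ← prod_mul_distrib]
    exact prod_congr rfl fun j _ ↦ by push_cast; ring
  rw [hsplit, prod_disjUnion, prod_map]
  simp only [addLeftEmbedding_apply]
  rw [hlow, hhigh]
  ring

lemma prod_range_natCast_add_sub (e : ℝ) (i k : ℕ) :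
    ∏ j ∈ range i, ((i + k : ℕ) + e - j) = ∏ m ∈ range i, ((k + m : ℕ) + 1 + e) := by
  rw [← prod_range_reflect]
  refine prod_congr rfl fun j hj ↦ ?_
  have := mem_range.mp hj
  rw [Nat.cast_sub (by omega), Nat.cast_sub (by omega)]
  push_cast
  ring

lemma prod_range_sub_natCast_add (e : ℝ) (i k : ℕ) :
    ∏ j ∈ range (i + k + 1), ((i : ℝ) - (j + e)) =
      (-1) ^ k * -e * ((∏ m ∈ range i, ((m : ℝ) + 1 - e)) * ∏ m ∈ range k, ((m : ℝ) + 1 + e)) := by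
  have hlow : ∏ j ∈ range i, ((i : ℝ) - (j + e)) = ∏ m ∈ range i, ((m : ℝ) + 1 - e) := by
    have h := prod_range_natCast_add_sub (-e) i 0
    simp only [add_zero, zero_add, ← sub_eq_add_neg] at h
    rw [← h]
    exact prod_congr rfl fun j _ ↦ by ring
  have hhigh : ∏ j ∈ range k, ((i : ℝ) - ((i + 1 + j : ℕ) + e)) =
      (-1) ^ k * ∏ m ∈ range k, ((m : ℝ) + 1 + e) := by
    rw [← card_range k, ← prod_const, card_range, ← prod_mul_distrib]
    exact prod_congr rfl fun j _ ↦ by push_cast; ring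
  rw [add_right_comm, prod_range_add, prod_range_succ, hlow, hhigh]
  ring

lemma factorial_mul_choose_mul_prod (e : ℝ) (i k : ℕ) :
    i.factorial * Ring.choose ((i + k : ℕ) + e) i * ∏ m ∈ range k, ((m : ℝ) + 1 + e) =
      ∏ m ∈ range (i + k), ((m : ℝ) + 1 + e) := by
  rw [ringChoose_eq_prod_div_factorial, mul_div_cancel₀ _ (by positivity),
    prod_range_natCast_add_sub, add_comm i k, prod_range_add, mul_comm]

/-- The factor by which `pade e r` exceeds the divided difference of `expDividedDiff` at the
nodes `padeNode e`. -/
noncomputable def padeConst (e : ℝ) (r : ℕ) : ℝ :=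
  e * ∏ m ∈ range r, (((m : ℝ) + 1) ^ 2 - e ^ 2)

lemma abs_padeConst_le {e : ℝ} (he : |e| ≤ 1) (r : ℕ) :
    |padeConst e r| ≤ |e| * (r.factorial : ℝ) ^ 2 := by
  rw [padeConst, abs_mul, abs_prod, ← prod_range_add_one_eq_factorial, Nat.cast_prod, ← prod_pow]
  gcongr with m
  have he2 : e ^ 2 ≤ 1 := (sq_le_one_iff_abs_le_one e).mpr he
  push_cast
  rw [abs_of_nonneg (by nlinarith [m.cast_nonneg (α := ℝ)])]
  linarith [sq_nonneg e]

lemma four_pow_mul_factorial_sq_le (r : ℕ) :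
    4 ^ r * r.factorial ^ 2 ≤ (2 * r + 1).factorial := by
  have hcentral := Nat.four_pow_le_two_mul_add_one_mul_central_binom r
  have hfac := Nat.choose_mul_factorial_mul_factorial (n := 2 * r) (k := r) (by omega)
  rw [show 2 * r - r = r by omega] at hfac
  rw [Nat.factorial_succ, ← hfac]
  calc 4 ^ r * r.factorial ^ 2
      ≤ (2 * r + 1) * (2 * r).choose r * r.factorial ^ 2 := Nat.mul_le_mul_right _ hcentral
    _ = (2 * r + 1) * ((2 * r).choose r * r.factorial * r.factorial) := by ring

lemma abs_padeConst_div_factorial_le {e : ℝ} (he : |e| ≤ 1) (r : ℕ) :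
    |padeConst e r| / (2 * r + 1).factorial ≤ |e| / 4 ^ r := by
  have hfac : (4 : ℝ) ^ r * (r.factorial : ℝ) ^ 2 ≤ (2 * r + 1).factorial := by
    exact_mod_cast four_pow_mul_factorial_sq_le r
  rw [div_le_div_iff₀ (by positivity) (by positivity)]
  calc |padeConst e r| * 4 ^ r ≤ |e| * (r.factorial : ℝ) ^ 2 * 4 ^ r := by
        gcongr
        exact abs_padeConst_le he r
    _ = |e| * (4 ^ r * (r.factorial : ℝ) ^ 2) := by ring
    _ ≤ |e| * (2 * r + 1).factorial := by gcongr

/-- The interpolation nodes `0, 1, 2, …` and `e, 1 + e, 2 + e, …`: the exponentials with these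
frequencies are the monomials of `pade e r (exp (i t))` and of
`exp (i e t) * pade (-e) r (exp (i t))`. -/
def padeNode (e : ℝ) : ℕ ⊕ ℕ → ℝ :=
  Sum.elim (fun i ↦ i) fun i ↦ i + e

@[simp] lemma padeNode_inl (e : ℝ) (i : ℕ) : padeNode e (Sum.inl i) = i := rfl

@[simp] lemma padeNode_inr (e : ℝ) (i : ℕ) : padeNode e (Sum.inr i) = i + e := rfl

lemma padeNode_injective {e : ℝ} (he0 : e ≠ 0) (he1 : |e| < 1) :
    Function.Injective (padeNode e) := by
  have hne (i j : ℕ) : (i : ℝ) ≠ j + e := fun h ↦ by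
    have hij : e = ((i - j : ℤ) : ℝ) := by push_cast; linarith
    have hlt : |(i - j : ℤ)| < 1 := by
      rwa [← Int.cast_lt (R := ℝ), Int.cast_abs, ← hij, Int.cast_one]
    exact he0 (by rw [hij, Int.abs_lt_one_iff.mp hlt, Int.cast_zero])
  rintro (i | i) (j | j) h
  · simpa using h
  · exact absurd h (hne i j)
  · exact absurd h.symm (hne j i)
  · simpa using h

/-- The first `r + 1` nodes of each of the two kinds. -/
def padeIndex (r : ℕ) : Finset (ℕ ⊕ ℕ) :=
  (range (r + 1)).disjSum (range (r + 1))

lemma sum_padeIndex {M : Type*} [AddCommMonoid M] (r : ℕ) (f : ℕ ⊕ ℕ → M) :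
    ∑ i ∈ padeIndex r, f i =
      ∑ i ∈ range (r + 1), f (Sum.inl i) + ∑ i ∈ range (r + 1), f (Sum.inr i) := by
  rw [padeIndex, sum_disjSum]

lemma nodalWeight_padeNode_inl (e : ℝ) (r i : ℕ) :
    Lagrange.nodalWeight (padeIndex r) (padeNode e) (Sum.inl i) =
      ((∏ j ∈ (range (r + 1)).erase i, ((i : ℝ) - j)) *
        ∏ j ∈ range (r + 1), ((i : ℝ) - (j + e)))⁻¹ := by
  have herase : (padeIndex r).erase (Sum.inl i) =
      ((range (r + 1)).erase i).disjSum (range (r + 1)) := by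
    ext (j | j) <;> simp [padeIndex]
  simp [Lagrange.nodalWeight, herase, prod_disjSum, prod_inv_distrib, mul_comm]

lemma nodalWeight_padeNode_inr (e : ℝ) (r i : ℕ) :
    Lagrange.nodalWeight (padeIndex r) (padeNode e) (Sum.inr i) =
      Lagrange.nodalWeight (padeIndex r) (padeNode (-e)) (Sum.inl i) := by
  have herase : (padeIndex r).erase (Sum.inr i) =
      (range (r + 1)).disjSum ((range (r + 1)).erase i) := by
    ext (j | j) <;> simp [padeIndex]
  have hshift (j : ℕ) : (i : ℝ) + e - j = i - (j + -e) := by ring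
  rw [nodalWeight_padeNode_inl]
  simp [Lagrange.nodalWeight, herase, prod_disjSum, prod_inv_distrib, hshift, mul_comm]

lemma padeConst_eq_neg_padeCoeff_mul_prod (e : ℝ) {r i : ℕ} (hi : i ≤ r) :
    padeConst e r = -padeCoeff e r i * ((∏ j ∈ (range (r + 1)).erase i, ((i : ℝ) - j)) *
      ∏ j ∈ range (r + 1), ((i : ℝ) - (j + e))) := by
  obtain ⟨k, rfl⟩ := Nat.exists_eq_add_of_le hi
  have hplus := factorial_mul_choose_mul_prod e i k
  have hminus := factorial_mul_choose_mul_prod (-e) k i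
  simp only [add_comm k i, ← sub_eq_add_neg] at hminus
  have hconst : padeConst e (i + k) =
      e * ((∏ m ∈ range (i + k), ((m : ℝ) + 1 + e)) *
        ∏ m ∈ range (i + k), ((m : ℝ) + 1 - e)) := by
    rw [padeConst, ← prod_mul_distrib]
    exact congrArg _ (prod_congr rfl fun m _ ↦ by ring)
  have hsign : (-1 : ℝ) ^ k * (-1) ^ k = 1 := by rw [← mul_pow]; simp
  rw [hconst, ← hplus, ← hminus, prod_erase_natCast_sub, prod_range_sub_natCast_add, padeCoeff,
    Nat.add_sub_cancel_left]
  linear_combination (-e * i.factorial * k.factorial * Ring.choose ((i + k : ℕ) + e) i *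
    Ring.choose ((i + k : ℕ) - e) k * (∏ m ∈ range i, ((m : ℝ) + 1 - e)) *
      ∏ m ∈ range k, ((m : ℝ) + 1 + e)) * hsign

lemma padeConst_mul_nodalWeight_inl {e : ℝ} (he0 : e ≠ 0) (he1 : |e| < 1) {r i : ℕ} (hi : i ≤ r) :
    padeConst e r * Lagrange.nodalWeight (padeIndex r) (padeNode e) (Sum.inl i) =
      -padeCoeff e r i := by
  have hne : Lagrange.nodalWeight (padeIndex r) (padeNode e) (Sum.inl i) ≠ 0 :=
    Lagrange.nodalWeight_ne_zero (padeNode_injective he0 he1).injOn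
      (by simpa [padeIndex] using Nat.lt_succ_iff.mpr hi)
  rw [nodalWeight_padeNode_inl] at hne ⊢
  rw [padeConst_eq_neg_padeCoeff_mul_prod e hi, mul_assoc,
    mul_inv_cancel₀ (inv_eq_zero.not.mp hne), mul_one]

lemma padeConst_mul_nodalWeight_inr {e : ℝ} (he0 : e ≠ 0) (he1 : |e| < 1) {r i : ℕ} (hi : i ≤ r) :
    padeConst e r * Lagrange.nodalWeight (padeIndex r) (padeNode e) (Sum.inr i) =
      padeCoeff (-e) r i := by
  have h := padeConst_mul_nodalWeight_inl (neg_ne_zero.mpr he0) (by rwa [abs_neg]) hi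
  rw [← nodalWeight_padeNode_inr, padeConst, neg_sq, neg_mul, neg_mul, neg_inj] at h
  exact h

lemma pade_sub_exp_mul_pade {e : ℝ} (he0 : e ≠ 0) (he1 : |e| < 1) (r : ℕ) (t : ℝ) :
    pade e r (Complex.exp (t * Complex.I)) -
        Complex.exp ((e * t : ℝ) * Complex.I) * pade (-e) r (Complex.exp (t * Complex.I)) =
      -(padeConst e r * expDividedDiff (padeNode e) (padeIndex r) t) := by
  rw [expDividedDiff, sum_padeIndex, pade, pade, mul_add, mul_sum, mul_sum, mul_sum, neg_add,
    ← sum_neg_distrib, sub_eq_add_neg]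
  congr 1
  · refine sum_congr rfl fun i hi ↦ ?_
    have hw := padeConst_mul_nodalWeight_inl he0 he1 (Nat.lt_succ_iff.mp (mem_range.mp hi))
    rw [← neg_eq_iff_eq_neg.mpr hw, ← Complex.exp_nat_mul]
    simp only [padeNode_inl]
    push_cast
    ring_nf
  · refine congrArg _ (sum_congr rfl fun i hi ↦ ?_)
    have hw := padeConst_mul_nodalWeight_inr he0 he1 (Nat.lt_succ_iff.mp (mem_range.mp hi))
    rw [← hw, ← Complex.exp_nat_mul, mul_left_comm, ← Complex.exp_add]
    simp only [padeNode_inr]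
    push_cast
    ring_nf

theorem norm_pade_sub_exp_mul_pade_le {e : ℝ} (he0 : e ≠ 0) (he1 : |e| < 1) (r : ℕ) (t : ℝ) :
    ‖pade e r (Complex.exp (t * Complex.I)) -
        Complex.exp ((e * t : ℝ) * Complex.I) * pade (-e) r (Complex.exp (t * Complex.I))‖ ≤
      |e| * |t| ^ (2 * r + 1) / 4 ^ r := by
  have hcard : (padeIndex r).card = 2 * r + 1 + 1 := by
    rw [padeIndex, card_disjSum, card_range]
    ring
  have hdd := norm_expDividedDiff_le (padeNode_injective he0 he1).injOn hcard t
  rw [pade_sub_exp_mul_pade he0 he1, norm_neg, norm_mul, Complex.norm_real, Real.norm_eq_abs]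
  calc |padeConst e r| * ‖expDividedDiff (padeNode e) (padeIndex r) t‖
      ≤ |padeConst e r| * (|t| ^ (2 * r + 1) / (2 * r + 1).factorial) := by gcongr
    _ = |padeConst e r| / (2 * r + 1).factorial * |t| ^ (2 * r + 1) := by ring
    _ ≤ |e| / 4 ^ r * |t| ^ (2 * r + 1) :=
        mul_le_mul_of_nonneg_right (abs_padeConst_div_factorial_le he1.le r) (by positivity)
    _ = |e| * |t| ^ (2 * r + 1) / 4 ^ r := by ring

end PadeApproximants

section PadeRecurrence

open Finset

/-- The coefficient of `(x - 1) ^ k` in `pade e r x`, for `k ≤ r`. -/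
noncomputable def padeShiftCoeff (e : ℝ) (r k : ℕ) : ℝ :=
  Ring.choose (r + e) k * (2 * r - k).choose r

lemma sum_padeCoeff_mul_choose (e : ℝ) {r k : ℕ} (hk : k ≤ r) :
    ∑ i ∈ range (r + 1), padeCoeff e r i * i.choose k = padeShiftCoeff e r k := by
  obtain ⟨m, rfl⟩ := Nat.exists_eq_add_of_le hk
  have hchoose : ((2 * (k + m) - k).choose (k + m) : ℝ) =
      Ring.choose (((k + m : ℕ) + e - k) + ((k + m : ℕ) - e)) m := by
    rw [Nat.choose_symm_of_eq_add (show 2 * (k + m) - k = k + m + m by omega),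
      ← Ring.choose_natCast, Nat.cast_sub (by omega)]
    push_cast
    ring_nf
  have hlow : ∑ i ∈ range k, padeCoeff e (k + m) i * i.choose k = 0 :=
    sum_eq_zero fun i hi ↦ by simp [Nat.choose_eq_zero_of_lt (mem_range.mp hi)]
  rw [padeShiftCoeff, hchoose, ← sum_range_choose_mul_choose _ ((k + m : ℕ) - e), mul_sum,
    add_assoc, sum_range_add, hlow, zero_add]
  refine sum_congr rfl fun j _ ↦ ?_
  have h := Ring.choose_smul_choose (((k + m : ℕ) : ℝ) + e) (n := k + j) (k := k) (by omega)
  rw [nsmul_eq_mul, Nat.add_sub_cancel_left] at h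
  rw [padeCoeff, ← mul_assoc, ← h, Nat.add_sub_add_left]
  ring

lemma pade_eq_sum_shift (e : ℝ) (r : ℕ) (x : ℂ) :
    pade e r x = ∑ k ∈ range (r + 1), (padeShiftCoeff e r k : ℂ) * (x - 1) ^ k := by
  have hpow (i : ℕ) (hi : i ∈ range (r + 1)) :
      x ^ i = ∑ k ∈ range (r + 1), (i.choose k : ℂ) * (x - 1) ^ k := by
    nth_rewrite 1 [← sub_add_cancel x 1]
    rw [add_pow, ← sum_subset (range_mono (Nat.succ_le_of_lt (mem_range.mp hi)))]
    · exact sum_congr rfl fun k _ ↦ by rw [one_pow, mul_one, mul_comm]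
    · intro k _ hk
      rw [Nat.choose_eq_zero_of_lt (by simpa using hk), Nat.cast_zero, zero_mul]
  calc pade e r x
      = ∑ i ∈ range (r + 1), ∑ k ∈ range (r + 1),
          (padeCoeff e r i * i.choose k : ℝ) * (x - 1) ^ k := by
        refine sum_congr rfl fun i hi ↦ ?_
        rw [hpow i hi, mul_sum]
        exact sum_congr rfl fun k _ ↦ by push_cast; ring
    _ = ∑ k ∈ range (r + 1), (padeShiftCoeff e r k : ℂ) * (x - 1) ^ k := by
        rw [sum_comm]
        refine sum_congr rfl fun k hk ↦ ?_
        rw [← sum_mul, ← sum_padeCoeff_mul_choose e (Nat.lt_succ_iff.mp (mem_range.mp hk)),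
          Complex.ofReal_sum]

lemma ringChoose_succ_mul {K : Type*} [Field K] [CharZero K] [BinomialRing K] (y : K) (k : ℕ) :
    Ring.choose y (k + 1) * (k + 1) = Ring.choose y k * (y - k) := by
  have hk : (k : K) + 1 ≠ 0 := by exact_mod_cast k.succ_ne_zero
  have hf : (k.factorial : K) ≠ 0 := by exact_mod_cast k.factorial_ne_zero
  rw [ringChoose_eq_prod_div_factorial, ringChoose_eq_prod_div_factorial, prod_range_succ,
    Nat.factorial_succ]
  push_cast
  field_simp

lemma ringChoose_add_one_succ_mul {K : Type*} [Field K] [CharZero K] [BinomialRing K] (y : K)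
    (k : ℕ) : Ring.choose (y + 1) (k + 1) * (k + 1) = (y + 1) * Ring.choose y k := by
  rw [Ring.choose_succ_succ, add_mul, ringChoose_succ_mul]
  ring

lemma padeShiftCoeff_zero_rec (e : ℝ) (n : ℕ) :
    ((n : ℝ) + 2) * padeShiftCoeff e (n + 2) 0 =
      2 * (2 * n + 3) * padeShiftCoeff e (n + 1) 0 := by
  have h := Nat.succ_mul_centralBinom_succ (n + 1)
  simp only [Nat.centralBinom] at h
  have h' := congrArg (fun m : ℕ ↦ (m : ℝ)) h
  simp only [padeShiftCoeff, Ring.choose_zero_right, one_mul, Nat.sub_zero]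
  push_cast at h'
  linear_combination h'

lemma padeShiftCoeff_one_rec (e : ℝ) (n : ℕ) :
    ((n : ℝ) + 2) * padeShiftCoeff e (n + 2) 1 =
      (2 * n + 3) * (padeShiftCoeff e (n + 1) 0 + 2 * padeShiftCoeff e (n + 1) 1) := by
  have hcentral : (2 * n + 2).choose (n + 1) = 2 * (2 * n + 1).choose (n + 1) := by
    rw [Nat.choose_succ_succ, Nat.choose_symm_half, ← two_mul]
  have hsucc := Nat.add_one_mul_choose_eq (2 * n + 2) (n + 1)
  rw [hcentral] at hsucc
  have hsucc' := congrArg (fun m : ℕ ↦ (m : ℝ)) hsucc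
  simp only [padeShiftCoeff, Ring.choose_zero_right, Ring.choose_one_right, one_mul, Nat.sub_zero,
    show 2 * (n + 2) - 1 = 2 * n + 3 by omega,
    show 2 * (n + 1) = 2 * n + 2 by omega, hcentral]
  push_cast at hsucc' ⊢
  linear_combination (-(n + 2 + e)) * hsucc'

lemma padeShiftCoeff_rec (e : ℝ) {n k : ℕ} (hk : k ≤ n) :
    ((n : ℝ) + 2) * (n + 1) * padeShiftCoeff e (n + 2) (k + 2) =
      (2 * n + 3) * (n + 1) *
          (padeShiftCoeff e (n + 1) (k + 1) + 2 * padeShiftCoeff e (n + 1) (k + 2)) -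
        ((n + 1) ^ 2 - e ^ 2) * padeShiftCoeff e n k := by
  obtain ⟨j, rfl⟩ := Nat.exists_eq_add_of_le hk
  set n := k + j with hn
  have hj : (j : ℝ) = n - k := by rw [hn]; push_cast; ring
  have hu₀ : ((n + j).choose (n + 1) : ℝ) * (n + 1) = (n + j).choose n * j := by
    have h := Nat.choose_succ_right_eq (n + j) n
    rw [Nat.add_sub_cancel_left] at h
    exact_mod_cast h
  have hu₁ : ((n : ℝ) + j + 1) * (n + j).choose n = (n + j + 1).choose (n + 1) * (n + 1) := by
    exact_mod_cast Nat.add_one_mul_choose_eq (n + j) n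
  have hu₂ : ((n : ℝ) + j + 2) * (n + j + 1).choose (n + 1) =
      (n + j + 2).choose (n + 2) * (n + 2) := by
    exact_mod_cast Nat.add_one_mul_choose_eq (n + j + 1) (n + 1)
  have hw₁ := ringChoose_add_one_succ_mul ((n : ℝ) + e) k
  have hw₂ := ringChoose_succ_mul ((n : ℝ) + e + 1) (k + 1)
  have hw₃ := ringChoose_add_one_succ_mul ((n : ℝ) + e + 1) (k + 1)
  simp only [padeShiftCoeff, show 2 * (n + 2) - (k + 2) = n + j + 2 by omega,
    show 2 * (n + 1) - (k + 1) = n + j + 1 by omega, show 2 * (n + 1) - (k + 2) = n + j by omega,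
    show 2 * n - k = n + j by omega]
  push_cast at hw₂ hw₃ ⊢
  rw [show (n : ℝ) + 2 + e = n + e + 1 + 1 by ring, show (n : ℝ) + 1 + e = n + e + 1 by ring]
  rw [← eq_div_iff (by positivity)] at hu₀ hw₁ hw₂ hw₃
  rw [eq_comm, ← eq_div_iff (by positivity)] at hu₁ hu₂
  rw [hw₃, hw₂, hw₁, hu₂, hu₁, hu₀, hj]
  field_simp
  ring

lemma sum_padeShiftCoeff_rec (e : ℝ) (n : ℕ) (y : ℂ) :
    ((n : ℂ) + 2) * (n + 1) *
        ∑ k ∈ range (n + 1), (padeShiftCoeff e (n + 2) (k + 2) : ℂ) * y ^ (k + 2) =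
      (2 * n + 3) * (n + 1) *
          (y * ∑ k ∈ range (n + 1), (padeShiftCoeff e (n + 1) (k + 1) : ℂ) * y ^ (k + 1) +
            2 * ∑ k ∈ range (n + 1), (padeShiftCoeff e (n + 1) (k + 2) : ℂ) * y ^ (k + 2)) -
        ((n + 1) ^ 2 - e ^ 2) * y ^ 2 *
          ∑ k ∈ range (n + 1), (padeShiftCoeff e n k : ℂ) * y ^ k := by
  simp only [mul_sum, ← sum_add_distrib, ← sum_sub_distrib]
  refine sum_congr rfl fun k hk ↦ ?_
  have h := congrArg (fun s : ℝ ↦ (s : ℂ))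
    (padeShiftCoeff_rec e (Nat.lt_succ_iff.mp (mem_range.mp hk)))
  push_cast at h
  linear_combination y ^ (k + 2) * h

theorem pade_rec (e : ℝ) (n : ℕ) (x : ℂ) :
    ((n : ℂ) + 2) * (n + 1) * pade e (n + 2) x =
      (2 * n + 3) * (n + 1) * (x + 1) * pade e (n + 1) x -
        ((n + 1) ^ 2 - e ^ 2) * (x - 1) ^ 2 * pade e n x := by
  obtain ⟨y, rfl⟩ : ∃ y, x = y + 1 := ⟨x - 1, by ring⟩
  have h₀ := congrArg (fun s : ℝ ↦ (s : ℂ)) (padeShiftCoeff_zero_rec e n)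
  have h₁ := congrArg (fun s : ℝ ↦ (s : ℂ)) (padeShiftCoeff_one_rec e n)
  have hsum := sum_padeShiftCoeff_rec e n y
  have hvanish : padeShiftCoeff e (n + 1) (n + 2) = 0 := by
    rw [padeShiftCoeff, Nat.choose_eq_zero_of_lt (by omega), Nat.cast_zero, mul_zero]
  have htop : pade e (n + 1) (y + 1) =
      ∑ k ∈ range (n + 3), (padeShiftCoeff e (n + 1) k : ℂ) * y ^ k := by
    rw [pade_eq_sum_shift, sum_range_succ _ (n + 2), hvanish, add_sub_cancel_right]
    simp
  rw [add_assoc y, one_add_one_eq_two, mul_assoc _ (y + 2), add_mul y]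
  nth_rewrite 2 [htop]
  rw [pade_eq_sum_shift, pade_eq_sum_shift, pade_eq_sum_shift, add_sub_cancel_right,
    sum_range_succ' _ (n + 2), sum_range_succ' _ (n + 1), sum_range_succ' _ (n + 1),
    sum_range_succ' _ (n + 2), sum_range_succ' _ (n + 1)]
  push_cast at h₀ h₁
  simp only [zero_add, add_assoc, one_add_one_eq_two, pow_zero, pow_one, mul_one] at hsum ⊢
  linear_combination hsum + ((n : ℂ) + 1) * h₀ + ((n : ℂ) + 1) * y * h₁

theorem pade_casoratian_ne_zero {e : ℝ} (he0 : e ≠ 0) (he1 : |e| < 1) (r : ℕ) {x : ℂ}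
    (hx : x ≠ 1) :
    pade e r x * pade (-e) (r + 1) x - pade e (r + 1) x * pade (-e) r x ≠ 0 := by
  have hx1 : x - 1 ≠ 0 := sub_ne_zero.mpr hx
  induction r with
  | zero =>
    have h : pade e 0 x * pade (-e) 1 x - pade e 1 x * pade (-e) 0 x = -2 * e * (x - 1) := by
      simp [pade, padeCoeff, sum_range_succ]
      ring
    rw [zero_add, h]
    simpa [he0] using hx1
  | succ n ih =>
    have hn : (((n : ℝ) + 1) ^ 2 - e ^ 2 : ℂ) ≠ 0 := by
      have hlt : e ^ 2 < ((n : ℝ) + 1) ^ 2 :=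
        ((sq_lt_one_iff_abs_lt_one e).mpr he1).trans_le
          (one_le_pow₀ (by linarith [n.cast_nonneg (α := ℝ)]))
      exact_mod_cast (sub_pos.mpr hlt).ne'
    have hrec : ((n : ℂ) + 2) * (n + 1) * (pade e (n + 1) x * pade (-e) (n + 2) x -
          pade e (n + 2) x * pade (-e) (n + 1) x) =
        ((n + 1) ^ 2 - e ^ 2) * (x - 1) ^ 2 *
          (pade e n x * pade (-e) (n + 1) x - pade e (n + 1) x * pade (-e) n x) := by
      have hneg := pade_rec (-e) n x
      push_cast at hneg
      linear_combination pade e (n + 1) x * hneg - pade (-e) (n + 1) x * pade_rec e n x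
    refine right_ne_zero_of_mul (a := ((n : ℂ) + 2) * (n + 1)) ?_
    rw [hrec]
    exact mul_ne_zero (mul_ne_zero (by exact_mod_cast hn) (pow_ne_zero 2 hx1)) ih

end PadeRecurrence

section EisensteinIntegers

open ComplexConjugate

/-- The primitive cube root of unity `(-1 + √-3) / 2`. -/
noncomputable def cubeRootOne : ℂ := ⟨-1 / 2, √3 / 2⟩

local notation "ω" => cubeRootOne

lemma cubeRootOne_sq : ω ^ 2 = -1 - ω := by
  have h3 : √3 * √3 = 3 := Real.mul_self_sqrt (by norm_num)
  apply Complex.ext <;> simp [cubeRootOne, pow_two] <;> linarith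

lemma conj_cubeRootOne : conj ω = -1 - ω := by
  apply Complex.ext <;> norm_num [cubeRootOne]

lemma cubeRootOne_pow_three : ω ^ 3 = 1 := by
  linear_combination (ω - 1) * cubeRootOne_sq

lemma norm_cubeRootOne : ‖ω‖ = 1 :=
  Complex.norm_eq_one_of_pow_eq_one cubeRootOne_pow_three (by norm_num)

/-- The ring `ℤ[ω]` of Eisenstein integers, as a subring of `ℂ`. -/
noncomputable def eisensteinIntegers : Subring ℂ where
  carrier := {z | ∃ x y : ℤ, z = x + y * ω}
  mul_mem' := by
    rintro _ _ ⟨a, b, rfl⟩ ⟨c, d, rfl⟩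
    refine ⟨a * c - b * d, a * d + b * c - b * d, ?_⟩
    push_cast
    linear_combination (b * d : ℂ) * cubeRootOne_sq
  one_mem' := ⟨1, 0, by simp⟩
  add_mem' := by
    rintro _ _ ⟨a, b, rfl⟩ ⟨c, d, rfl⟩
    exact ⟨a + c, b + d, by push_cast; ring⟩
  zero_mem' := ⟨0, 0, by simp⟩
  neg_mem' := by
    rintro _ ⟨a, b, rfl⟩
    exact ⟨-a, -b, by push_cast; ring⟩

lemma add_mul_mem_eisensteinIntegers (x y : ℤ) : (x : ℂ) + y * ω ∈ eisensteinIntegers :=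
  ⟨x, y, rfl⟩

lemma cubeRootOne_mem_eisensteinIntegers : ω ∈ eisensteinIntegers := ⟨0, 1, by simp⟩

lemma conj_add_mul_cubeRootOne (x y : ℤ) :
    conj ((x : ℂ) + y * ω) = (x - y : ℤ) + (-y : ℤ) * ω := by
  simp only [map_add, map_mul, conj_cubeRootOne, map_intCast]
  push_cast
  ring

lemma conj_mem_eisensteinIntegers {z : ℂ} (hz : z ∈ eisensteinIntegers) :
    conj z ∈ eisensteinIntegers := by
  obtain ⟨x, y, rfl⟩ := hz
  exact ⟨_, _, conj_add_mul_cubeRootOne x y⟩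

lemma norm_add_mul_cubeRootOne_sq (x y : ℤ) :
    ‖(x : ℂ) + y * ω‖ ^ 2 = (x ^ 2 - x * y + y ^ 2 : ℤ) := by
  rw [← Complex.ofReal_inj, Complex.ofReal_pow, ← Complex.mul_conj', conj_add_mul_cubeRootOne]
  push_cast
  linear_combination -(y ^ 2 : ℂ) * cubeRootOne_sq

lemma one_le_norm_of_mem_eisensteinIntegers {z : ℂ} (hz : z ∈ eisensteinIntegers) (h0 : z ≠ 0) :
    1 ≤ ‖z‖ := by
  obtain ⟨x, y, rfl⟩ := hz
  have hpos : 0 < ‖(x : ℂ) + y * ω‖ ^ 2 := by positivity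
  rw [← one_le_sq_iff₀ (norm_nonneg _)]
  rw [norm_add_mul_cubeRootOne_sq] at hpos ⊢
  exact_mod_cast hpos

lemma add_mul_cubeRootOne_inj {x y x' y' : ℤ} :
    (x : ℂ) + y * ω = x' + y' * ω ↔ x = x' ∧ y = y' := by
  refine ⟨fun h ↦ ?_, by rintro ⟨rfl, rfl⟩; rfl⟩
  have him : y = y' := by simpa [cubeRootOne] using congrArg Complex.im h
  subst him
  exact ⟨by simpa using h, rfl⟩

lemma exists_intCast_eq_of_conj_eq {z : ℂ} (hz : z ∈ eisensteinIntegers) (hc : conj z = z) :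
    ∃ n : ℤ, z = n := by
  obtain ⟨x, y, rfl⟩ := hz
  rw [conj_add_mul_cubeRootOne, add_mul_cubeRootOne_inj] at hc
  obtain rfl : y = 0 := by omega
  exact ⟨x, by simp⟩

/-- The square root `√-3 = 2 ω + 1`. -/
noncomputable def sqrtNegThree : ℂ := 2 * ω + 1

local notation "θ" => sqrtNegThree

lemma sqrtNegThree_sq : θ ^ 2 = -3 := by
  rw [sqrtNegThree]
  linear_combination 4 * cubeRootOne_sq

lemma sqrtNegThree_mem_eisensteinIntegers : θ ∈ eisensteinIntegers :=
  ⟨1, 2, by rw [sqrtNegThree]; push_cast; ring⟩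

lemma sqrtNegThree_ne_zero : θ ≠ 0 := by
  intro h
  simpa [h] using sqrtNegThree_sq

lemma conj_sqrtNegThree : conj θ = -θ := by
  simp only [sqrtNegThree, map_add, map_mul, conj_cubeRootOne, map_one, Complex.conj_ofNat]
  ring

lemma norm_sqrtNegThree : ‖θ‖ = √3 := by
  rw [eq_comm, Real.sqrt_eq_iff_eq_sq (by norm_num) (norm_nonneg _), ← norm_pow, sqrtNegThree_sq]
  simp

lemma norm_sqrtNegThree_lt : ‖θ‖ < 1.7321 := by
  rw [norm_sqrtNegThree, Real.sqrt_lt' (by norm_num)]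
  norm_num

lemma two_mul_padicValNat_three_factorial_le (k : ℕ) : 2 * padicValNat 3 k.factorial ≤ k :=
  (sub_one_mul_padicValNat_factorial (p := 3) k).trans_le (Nat.sub_le _ _)

/-- For `x = conj β / β` with `β - conj β = 3 √-3`, the powers of `√-3` in `β ^ k * (x - 1) ^ k`
cancel the denominators of the binomial coefficients. -/
lemma pow_mul_padeShiftCoeff_mul_mem_eisensteinIntegers (a : ℤ) (r k : ℕ) {β x : ℂ}
    (hx : β * x = β - 3 * θ) :
    β ^ k * ((padeShiftCoeff (a / 3) r k : ℂ) * (x - 1) ^ k) ∈ eisensteinIntegers := by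
  obtain ⟨q, hq⟩ := exists_int_eq_pow_mul_choose_div 3 (3 * r + a) k
  obtain ⟨l, hl⟩ := Nat.exists_eq_add_of_le (two_mul_padicValNat_three_factorial_le k)
  set v := padicValNat 3 k.factorial
  have hpow : β ^ k * (x - 1) ^ k = (3 : ℂ) ^ (k + v) * ((-1) ^ (k + v) * θ ^ l) := by
    calc β ^ k * (x - 1) ^ k = (-3 * θ) ^ k := by
          rw [← mul_pow, show β * (x - 1) = -3 * θ by linear_combination hx]
      _ = (-3) ^ k * ((θ ^ 2) ^ v * θ ^ l) := by rw [mul_pow, ← pow_mul, ← pow_add, ← hl]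
      _ = (-3) ^ (k + v) * θ ^ l := by rw [sqrtNegThree_sq]; ring
      _ = _ := by rw [← mul_assoc, ← mul_pow]; norm_num
  have harg : ((3 * r + a : ℤ) : ℝ) / (3 : ℕ) = r + a / 3 := by push_cast; ring
  rw [padeShiftCoeff, Complex.ofReal_mul, Complex.ofReal_natCast]
  rw [harg, Nat.cast_ofNat] at hq
  generalize Ring.choose ((r : ℝ) + a / 3) k = c at hq ⊢
  have hqC : (3 : ℂ) ^ (k + v) * c = q := by exact_mod_cast congrArg (fun y : ℝ ↦ (y : ℂ)) hq
  have hterm : β ^ k * (c * ((2 * r - k).choose r : ℕ) * (x - 1) ^ k) =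
      q * ((2 * r - k).choose r : ℕ) * ((-1) ^ (k + v) * θ ^ l) := by
    rw [← hqC]
    linear_combination c * ((2 * r - k).choose r : ℕ) * hpow
  rw [hterm]
  exact mul_mem (mul_mem (intCast_mem _ q) (natCast_mem _ _))
    (mul_mem (pow_mem (neg_mem (one_mem _)) _) (pow_mem sqrtNegThree_mem_eisensteinIntegers _))

theorem pow_mul_pade_mem_eisensteinIntegers (a : ℤ) (r : ℕ) {β x : ℂ}
    (hβ : β ∈ eisensteinIntegers) (hx : β * x = β - 3 * θ) :
    β ^ r * pade (a / 3) r x ∈ eisensteinIntegers := by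
  rw [pade_eq_sum_shift, Finset.mul_sum]
  refine Subring.sum_mem _ fun k hk ↦ ?_
  rw [← Nat.sub_add_cancel (Nat.lt_succ_iff.mp (Finset.mem_range.mp hk)), pow_add, mul_assoc,
    Nat.sub_add_cancel (Nat.lt_succ_iff.mp (Finset.mem_range.mp hk))]
  exact mul_mem (pow_mem hβ _) (pow_mul_padeShiftCoeff_mul_mem_eisensteinIntegers a r k hx)

end EisensteinIntegers

section CubicThueEquation

open ComplexConjugate

local notation "ω" => cubeRootOne
local notation "θ" => sqrtNegThree

/-- The cubic Thue equation `A ξ³ - conj (A ξ³) = 3 √-3`. For `A = 3 a + b + 3 a ω` and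
`ξ = x + y ω` it says that `a x³ + b x² y - (3 a + b) x y² + a y³ = 1`. -/
def SolvesThue (A ξ : ℂ) : Prop := A * ξ ^ 3 - conj (A * ξ ^ 3) = 3 * θ

namespace SolvesThue

variable {A ξ ξ₀ : ℂ}

lemma ne_zero (h : SolvesThue A ξ) : ξ ≠ 0 := by
  rintro rfl
  simp [SolvesThue, sqrtNegThree_ne_zero, eq_comm] at h

lemma cubeRootOne_pow_mul (h : SolvesThue A ξ) (j : ℕ) : SolvesThue A (ω ^ j * ξ) := by
  rwa [SolvesThue, mul_pow, ← pow_mul, mul_comm j 3, pow_mul, cubeRootOne_pow_three, one_pow,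
    one_mul]

lemma eq_of_conj_mul_eq (h₀ : SolvesThue A ξ₀) (h : SolvesThue A ξ)
    (hw : conj (ξ * conj ξ₀) = ξ * conj ξ₀) : ξ = ξ₀ := by
  have hξ₀ := h₀.ne_zero
  have hξ₀' : conj ξ₀ ≠ 0 := (map_ne_zero _).mpr hξ₀
  obtain ⟨s, hs⟩ := Complex.conj_eq_iff_real.mp (show conj (ξ / ξ₀) = ξ / ξ₀ by
    rw [map_div₀, div_eq_div_iff hξ₀' hξ₀, ← hw, map_mul, Complex.conj_conj])
  obtain rfl : ξ = s * ξ₀ := by rw [← hs, div_mul_cancel₀ _ hξ₀]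
  rw [SolvesThue] at h h₀
  simp only [map_mul, map_pow, Complex.conj_ofReal] at h h₀
  have hs3 : (s : ℂ) ^ 3 * (3 * θ) = 1 * (3 * θ) := by
    linear_combination h - (s : ℂ) ^ 3 * h₀
  have hs1 : s ^ 3 = 1 ^ 3 := by
    rw [one_pow]
    exact_mod_cast mul_right_cancel₀ (mul_ne_zero three_ne_zero sqrtNegThree_ne_zero) hs3
  rw [(Odd.strictMono_pow (by decide : Odd 3)).injective hs1, Complex.ofReal_one, one_mul]

end SolvesThue

lemma exists_exp_mul_eq_conj {β : ℂ} (h0 : β ≠ 0) (hβ : β - conj β = 3 * θ) :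
    ∃ φ : ℝ, Complex.exp (φ * Complex.I) * β = conj β ∧ |φ| ≤ 8.2 / ‖β‖ := by
  have hnorm : ‖conj β / β‖ = 1 := by
    rw [norm_div, RCLike.norm_conj, div_self (norm_ne_zero_iff.mpr h0)]
  have harc : |(conj β / β).arg| ≤ Real.pi / 2 * (3 * ‖θ‖ / ‖β‖) := by
    have h := Complex.angle_le_mul_norm_sub hnorm norm_one
    rwa [Complex.angle_one_right (norm_ne_zero_iff.mp (by rw [hnorm]; exact one_ne_zero)),
      div_sub_one h0, norm_div, norm_sub_rev, hβ, norm_mul, Complex.norm_ofNat] at h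
  refine ⟨(conj β / β).arg, ?_, harc.trans ?_⟩
  · have h := Complex.norm_mul_exp_arg_mul_I (conj β / β)
    rw [hnorm, Complex.ofReal_one, one_mul] at h
    rw [h, div_mul_cancel₀ _ h0]
  · have hconst : Real.pi / 2 * (3 * ‖θ‖) ≤ 8.2 := by
      nlinarith [Real.pi_lt_d2, norm_sqrtNegThree_lt, norm_nonneg θ]
    rw [← mul_div_assoc]
    gcongr

lemma norm_sub_mul_le_norm_pow_three_sub {u v : ℂ} (h₁ : ‖u - v‖ ≤ ‖ω * u - v‖)
    (h₂ : ‖u - v‖ ≤ ‖ω ^ 2 * u - v‖) : ‖u - v‖ * (3 / 4 * ‖u‖ ^ 2) ≤ ‖u ^ 3 - v ^ 3‖ := by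
  have hfactor : u ^ 3 - v ^ 3 = (u - v) * ((ω * u - v) * (ω ^ 2 * u - v)) := by
    linear_combination (-(ω - 1) * u ^ 3 + ω * u ^ 2 * v - u * v ^ 2) * cubeRootOne_sq
  have hdist₁ : √3 * ‖u‖ = ‖(u - v) - (ω * u - v)‖ := by
    rw [show (u - v) - (ω * u - v) = ω ^ 2 * θ * u by
      rw [sqrtNegThree]; linear_combination ((-2 * (ω - 1) - 1) * u) * cubeRootOne_sq]
    simp [norm_cubeRootOne, norm_sqrtNegThree]
  have hdist₂ : √3 * ‖u‖ = ‖(u - v) - (ω ^ 2 * u - v)‖ := by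
    rw [show (u - v) - (ω ^ 2 * u - v) = -ω * θ * u by
      rw [sqrtNegThree]; linear_combination u * cubeRootOne_sq]
    simp [norm_cubeRootOne, norm_sqrtNegThree]
  have hfar₁ : √3 / 2 * ‖u‖ ≤ ‖ω * u - v‖ := by
    linarith [norm_sub_le (u - v) (ω * u - v)]
  have hfar₂ : √3 / 2 * ‖u‖ ≤ ‖ω ^ 2 * u - v‖ := by
    linarith [norm_sub_le (u - v) (ω ^ 2 * u - v)]
  calc ‖u - v‖ * (3 / 4 * ‖u‖ ^ 2) = ‖u - v‖ * ((√3 / 2 * ‖u‖) * (√3 / 2 * ‖u‖)) := by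
        linear_combination (-‖u - v‖ * ‖u‖ ^ 2 / 4) * Real.mul_self_sqrt (by norm_num : (0 : ℝ) ≤ 3)
    _ ≤ ‖u - v‖ * (‖ω * u - v‖ * ‖ω ^ 2 * u - v‖) := by gcongr
    _ = ‖u ^ 3 - v ^ 3‖ := by rw [hfactor, norm_mul, norm_mul]

lemma exists_norm_cubeRootOne_pow_mul_sub_mul_le (u v : ℂ) :
    ∃ j : ℕ, ‖ω ^ j * u - v‖ * (3 / 4 * ‖u‖ ^ 2) ≤ ‖u ^ 3 - v ^ 3‖ := by
  obtain ⟨j, -, hj⟩ := (Finset.range 3).exists_min_image (fun i ↦ ‖ω ^ i * u - v‖) (by simp)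
  have hmin : ∀ i, ‖ω ^ j * u - v‖ ≤ ‖ω ^ i * (ω ^ j * u) - v‖ := fun i ↦ by
    rw [← mul_assoc, ← pow_add, pow_eq_pow_mod (i + j) cubeRootOne_pow_three]
    exact hj _ (Finset.mem_range.mpr (Nat.mod_lt _ three_pos))
  refine ⟨j, ?_⟩
  have h := norm_sub_mul_le_norm_pow_three_sub (by simpa using hmin 1) (hmin 2)
  rwa [norm_mul, norm_pow, norm_cubeRootOne, one_pow, one_mul, mul_pow, ← pow_mul, mul_comm j,
    pow_mul, cubeRootOne_pow_three, one_pow, one_mul] at h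

/-- The equation bounds `w³ - (τ conj w)³` for `w = ξ * conj ξ₀`. This is the product of the numbers
`w - ω ^ i * τ conj w`, only one of which can be small. -/
lemma SolvesThue.exists_norm_sub_mul_conj_le {A ξ₀ ξ τ : ℂ} (h : SolvesThue A ξ)
    (hξ₀ : ξ₀ ≠ 0) (hτ : τ ^ 3 * (A * ξ₀ ^ 3) = conj (A * ξ₀ ^ 3)) :
    ∃ j : ℕ, ‖ω ^ j * ξ * conj ξ₀ - τ * conj (ω ^ j * ξ * conj ξ₀)‖ *
      (‖A * ξ₀ ^ 3‖ * ‖ξ‖ ^ 2) ≤ 7 * ‖ξ₀‖ ^ 4 := by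
  set w := ξ * conj ξ₀ with hw
  have hcubes : A * ξ₀ ^ 3 * (w ^ 3 - (τ * conj w) ^ 3) = 3 * θ * (ξ₀ ^ 3 * conj ξ₀ ^ 3) := by
    have h' := h
    simp only [SolvesThue, map_mul, map_pow] at h' hτ
    simp only [hw, map_mul, Complex.conj_conj]
    linear_combination (ξ₀ ^ 3 * conj ξ₀ ^ 3) * h' - (conj ξ * ξ₀) ^ 3 * hτ
  obtain ⟨j, hj⟩ := exists_norm_cubeRootOne_pow_mul_sub_mul_le w (τ * conj w)
  refine ⟨2 * j, ?_⟩
  have hrot : ω ^ (2 * j) * ξ * conj ξ₀ - τ * conj (ω ^ (2 * j) * ξ * conj ξ₀) =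
      ω ^ j * (ω ^ j * w - τ * conj w) := by
    have hconj : conj (ω ^ (2 * j)) = ω ^ j := by
      rw [map_pow, conj_cubeRootOne, ← cubeRootOne_sq, ← pow_mul, ← mul_assoc,
        pow_eq_pow_mod _ cubeRootOne_pow_three, pow_eq_pow_mod j cubeRootOne_pow_three]
      congr 1
      omega
    rw [mul_assoc (ω ^ (2 * j)), ← hw, map_mul, hconj]
    ring
  rw [hrot, norm_mul, norm_pow, norm_cubeRootOne, one_pow, one_mul]
  refine le_of_mul_le_mul_right (a := 3 / 4 * ‖ξ₀‖ ^ 2) ?_ (by positivity)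
  calc ‖ω ^ j * w - τ * conj w‖ * (‖A * ξ₀ ^ 3‖ * ‖ξ‖ ^ 2) * (3 / 4 * ‖ξ₀‖ ^ 2)
      = ‖A * ξ₀ ^ 3‖ * (‖ω ^ j * w - τ * conj w‖ * (3 / 4 * ‖w‖ ^ 2)) := by
        rw [hw, norm_mul ξ, RCLike.norm_conj]; ring
    _ ≤ ‖A * ξ₀ ^ 3‖ * ‖w ^ 3 - (τ * conj w) ^ 3‖ := by gcongr
    _ = 3 * ‖θ‖ * ‖ξ₀‖ ^ 6 := by
        rw [← norm_mul, hcubes]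
        simp only [norm_mul, norm_pow, RCLike.norm_conj, Complex.norm_ofNat]
        ring
    _ ≤ 3 * 1.75 * ‖ξ₀‖ ^ 6 := by gcongr; linarith [norm_sqrtNegThree_lt]
    _ = 7 * ‖ξ₀‖ ^ 4 * (3 / 4 * ‖ξ₀‖ ^ 2) := by ring

end CubicThueEquation

section PadeForms

open ComplexConjugate

local notation "θ" => sqrtNegThree

/-- The linear form in `w` and `conj w` whose coefficients are the Padé approximants to the
cube root. -/
noncomputable def padeForm (r : ℕ) (x w : ℂ) : ℂ :=
  pade (1 / 3) r x * conj w - pade (-(1 / 3)) r x * w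

lemma padeForm_zero (x w : ℂ) : padeForm 0 x w = conj w - w := by
  simp [padeForm, pade, padeCoeff]

lemma pade_one (e : ℝ) (x : ℂ) : pade e 1 x = (1 - e : ℝ) + (1 + e : ℝ) * x := by
  simp [pade, padeCoeff, Finset.sum_range_succ]

lemma eq_zero_of_padeForm_eq_zero {r : ℕ} {x w : ℂ} (hx : x ≠ 1) (h : padeForm r x w = 0)
    (h' : padeForm (r + 1) x w = 0) : w = 0 := by
  rw [padeForm] at h h'
  have hdet : (pade (1 / 3) r x * pade (-(1 / 3)) (r + 1) x -
      pade (1 / 3) (r + 1) x * pade (-(1 / 3)) r x) * conj w = 0 := by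
    linear_combination pade (-(1 / 3)) (r + 1) x * h - pade (-(1 / 3)) r x * h'
  have hcas := pade_casoratian_ne_zero (e := 1 / 3) (by norm_num)
    (by rw [abs_of_nonneg] <;> norm_num) r hx
  exact (map_eq_zero _).mp ((mul_eq_zero.mp hdet).resolve_left hcas)

lemma pow_mul_padeForm_mem_eisensteinIntegers (r : ℕ) {β x w : ℂ} (hβ : β ∈ eisensteinIntegers)
    (hx : β * x = β - 3 * θ) (hw : w ∈ eisensteinIntegers) :
    β ^ r * padeForm r x w ∈ eisensteinIntegers := by
  have hP := pow_mul_pade_mem_eisensteinIntegers 1 r hβ hx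
  have hQ := pow_mul_pade_mem_eisensteinIntegers (-1) r hβ hx
  rw [Int.cast_one] at hP
  rw [Int.cast_neg, Int.cast_one, neg_div] at hQ
  rw [padeForm, mul_sub, ← mul_assoc, ← mul_assoc]
  exact sub_mem (mul_mem hP (conj_mem_eisensteinIntegers hw)) (mul_mem hQ hw)

lemma norm_padeForm_le (r : ℕ) (φ : ℝ) (w : ℂ) :
    ‖padeForm r (Complex.exp (φ * Complex.I)) w‖ ≤ 1 / 3 * |φ| ^ (2 * r + 1) / 4 ^ r * ‖w‖ +
      4 ^ r * ‖w - Complex.exp ((1 / 3 * φ : ℝ) * Complex.I) * conj w‖ := by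
  have he : |(1 / 3 : ℝ)| = 1 / 3 := abs_of_nonneg (by norm_num)
  have herr := norm_pade_sub_exp_mul_pade_le (e := 1 / 3) (by norm_num) (by rw [he]; norm_num) r φ
  have hQ := norm_pade_le (e := -(1 / 3)) (by rw [abs_neg, he]; norm_num) r
    (Complex.norm_exp_ofReal_mul_I φ).le
  rw [he] at herr
  set x := Complex.exp (φ * Complex.I)
  set τ := Complex.exp ((1 / 3 * φ : ℝ) * Complex.I)
  calc ‖padeForm r x w‖ = ‖(pade (1 / 3) r x - τ * pade (-(1 / 3)) r x) * conj w -
        pade (-(1 / 3)) r x * (w - τ * conj w)‖ := by rw [padeForm]; congr 1; ring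
    _ ≤ _ := (norm_sub_le _ _).trans (by rw [norm_mul, norm_mul, RCLike.norm_conj]; gcongr)

/-- The degrees `r` for which the `r`-th Padé form, scaled by the `r`-th power of a number of
modulus `B`, is forced to be smaller than `1` at a point of modulus `W` and defect `δ`. -/
def PadeWindow (B W δ : ℝ) (r : ℕ) : Prop :=
  2 * (4 * B) ^ r * δ < 1 ∧ 6 * W * 17 ^ r < B ^ (r + 1)

lemma PadeWindow.pow_mul_lt_one {B W δ φ : ℝ} {r : ℕ} (h : PadeWindow B W δ r) (hB : 0 < B)
    (hW : 0 ≤ W) (hφ : |φ| ≤ 8.2 / B) :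
    B ^ r * (1 / 3 * |φ| ^ (2 * r + 1) / 4 ^ r * W + 4 ^ r * δ) < 1 := by
  obtain ⟨hδ, hlt⟩ := h
  have hangle : |φ| ^ (2 * r + 1) ≤ 8.2 * (17 ^ r * 4 ^ r) / (B ^ r * B ^ (r + 1)) := by
    calc |φ| ^ (2 * r + 1) ≤ (8.2 / B) ^ (2 * r + 1) := by gcongr
      _ = 8.2 * 67.24 ^ r / (B ^ r * B ^ (r + 1)) := by
        rw [div_pow, pow_succ, pow_mul, ← pow_add, show r + (r + 1) = 2 * r + 1 by ring,
          mul_comm (_ ^ r)]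
        norm_num
      _ ≤ _ := by rw [← mul_pow]; gcongr; norm_num
  have hmain : B ^ r * (1 / 3 * |φ| ^ (2 * r + 1) / 4 ^ r * W) < 1 / 2 := by
    calc B ^ r * (1 / 3 * |φ| ^ (2 * r + 1) / 4 ^ r * W)
        ≤ B ^ r * (1 / 3 * (8.2 * (17 ^ r * 4 ^ r) / (B ^ r * B ^ (r + 1))) / 4 ^ r * W) := by
          gcongr
      _ = 8.2 / 18 * (6 * W * 17 ^ r / B ^ (r + 1)) := by field_simp; ring
      _ ≤ 1 / 2 * (6 * W * 17 ^ r / B ^ (r + 1)) :=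
          mul_le_mul_of_nonneg_right (by norm_num) (by positivity)
      _ < 1 / 2 := by
          rw [mul_lt_iff_lt_one_right (by norm_num), div_lt_one (by positivity)]
          exact hlt
  calc B ^ r * (1 / 3 * |φ| ^ (2 * r + 1) / 4 ^ r * W + 4 ^ r * δ)
      = B ^ r * (1 / 3 * |φ| ^ (2 * r + 1) / 4 ^ r * W) + (4 * B) ^ r * δ := by
        rw [mul_pow]; ring
    _ < 1 := by linarith

theorem padeForm_eq_zero {r : ℕ} {β w : ℂ} {φ : ℝ} (hβ : β ∈ eisensteinIntegers) (hβ0 : β ≠ 0)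
    (hb : β - conj β = 3 * θ) (hφ : Complex.exp (φ * Complex.I) * β = conj β)
    (hφ' : |φ| ≤ 8.2 / ‖β‖) (hw : w ∈ eisensteinIntegers)
    (hr : PadeWindow ‖β‖ ‖w‖ ‖w - Complex.exp ((1 / 3 * φ : ℝ) * Complex.I) * conj w‖ r) :
    padeForm r (Complex.exp (φ * Complex.I)) w = 0 := by
  by_contra hne
  have hmem := pow_mul_padeForm_mem_eisensteinIntegers r hβ
    (show β * Complex.exp (φ * Complex.I) = β - 3 * θ by linear_combination hφ - hb) hw
  refine (one_le_norm_of_mem_eisensteinIntegers hmem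
    (mul_ne_zero (pow_ne_zero _ hβ0) hne)).not_gt ?_
  rw [norm_mul, norm_pow]
  exact (mul_le_mul_of_nonneg_left (norm_padeForm_le r φ w) (by positivity)).trans_lt
    (hr.pow_mul_lt_one (norm_pos_iff.mpr hβ0) (norm_nonneg w) hφ')

lemma lt_mul_sq_of_pow_le {k : ℕ} {B ρ X : ℝ} (hρ : 1 ≤ ρ) (hB0 : 0 ≤ B)
    (hB : 10 ^ 7 * ρ ^ 6 ≤ B ^ 2) (h : B ^ (k + 2) ≤ 6 * (ρ * X) * 17 ^ (k + 1)) :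
    14 * ρ ^ 4 * (4 * B) ^ (k + 3) < B * X ^ 2 := by
  have hρ6 : (1 : ℝ) ≤ ρ ^ 6 := one_le_pow₀ hρ
  have hB1 : 1156 ≤ B := by
    refine le_of_sq_le_sq ?_ hB0
    linarith
  have hsq : B ^ (2 * k + 4) ≤ 36 * ρ ^ 2 * X ^ 2 * 289 ^ (k + 1) := by
    calc B ^ (2 * k + 4) = (B ^ (k + 2)) ^ 2 := by rw [← pow_mul]; ring_nf
      _ ≤ (6 * (ρ * X) * 17 ^ (k + 1)) ^ 2 := by gcongr
      _ = 36 * ρ ^ 2 * X ^ 2 * (17 ^ 2) ^ (k + 1) := by rw [← pow_mul]; ring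
      _ = _ := by norm_num
  have hlt : 8064 * ρ ^ 6 * 1156 ^ (k + 1) < B ^ (k + 2) := by
    calc 8064 * ρ ^ 6 * 1156 ^ (k + 1) = 1156 ^ k * (8064 * 1156 * ρ ^ 6) := by ring
      _ < 1156 ^ k * (10 ^ 7 * ρ ^ 6) := by gcongr; norm_num
      _ ≤ B ^ k * B ^ 2 := by gcongr
      _ = _ := by ring
  refine lt_of_mul_lt_mul_right (a := 36 * ρ ^ 2 * 289 ^ (k + 1)) ?_ (by positivity)
  calc 14 * ρ ^ 4 * (4 * B) ^ (k + 3) * (36 * ρ ^ 2 * 289 ^ (k + 1))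
      = B ^ (k + 3) * (8064 * ρ ^ 6 * (4 * 289) ^ (k + 1)) := by rw [mul_pow, mul_pow]; ring
    _ < B ^ (k + 3) * B ^ (k + 2) := by norm_num only; gcongr
    _ = B * B ^ (2 * k + 4) := by ring
    _ ≤ B * (36 * ρ ^ 2 * X ^ 2 * 289 ^ (k + 1)) := by gcongr
    _ = _ := by ring

lemma padeWindow_of_lt {B W X δ ρ : ℝ} {r : ℕ} (hδ : δ * (B * X ^ 2) ≤ 7 * ρ ^ 4) (hB : 0 < B)
    (h : 14 * ρ ^ 4 * (4 * B) ^ r < B * X ^ 2) (hW : 6 * W * 17 ^ r < B ^ (r + 1)) :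
    PadeWindow B W δ r := by
  refine ⟨lt_of_mul_lt_mul_right (a := B * X ^ 2) ?_ (by positivity), hW⟩
  calc 2 * (4 * B) ^ r * δ * (B * X ^ 2) = 2 * (4 * B) ^ r * (δ * (B * X ^ 2)) := by ring
    _ ≤ 2 * (4 * B) ^ r * (7 * ρ ^ 4) := by gcongr
    _ < 1 * (B * X ^ 2) := by linarith

lemma exists_mul_pow_lt_pow_succ (C : ℝ) {a B : ℝ} (haB : a < B) (ha : 1 ≤ a) :
    ∃ r : ℕ, C * a ^ r < B ^ (r + 1) := by
  have ha0 : 0 < a := by linarith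
  obtain ⟨n, hn⟩ := pow_unbounded_of_one_lt C ((one_lt_div₀ ha0).mpr haB)
  rw [div_pow, lt_div_iff₀ (by positivity)] at hn
  exact ⟨n, hn.trans_le (pow_le_pow_right₀ (by linarith) n.le_succ)⟩

/-- The least `r` meeting the second condition of `PadeWindow` also meets the first, and `r + 1`
meets both unless `r ≤ 1`. -/
theorem exists_padeWindow {B ρ X δ : ℝ} (hρ : 1 ≤ ρ) (hX : ρ ≤ X) (hB0 : 0 ≤ B)
    (hB : 10 ^ 7 * ρ ^ 6 ≤ B ^ 2) (hδ : δ * (B * X ^ 2) ≤ 7 * ρ ^ 4) :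
    PadeWindow B (ρ * X) δ 0 ∨ PadeWindow B (ρ * X) δ 1 ∨
      ∃ r, PadeWindow B (ρ * X) δ r ∧ PadeWindow B (ρ * X) δ (r + 1) := by
  have hB3 : 3000 * ρ ^ 3 ≤ B := by
    refine le_of_sq_le_sq (le_trans ?_ hB) hB0
    linarith [show 0 ≤ ρ ^ 6 by positivity]
  have hρ3 : 1 ≤ ρ ^ 3 := one_le_pow₀ hρ
  have hBpos : 0 < B := by linarith
  have hex := exists_mul_pow_lt_pow_succ (6 * (ρ * X)) (show (17 : ℝ) < B by linarith) (by norm_num)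
  classical
  have hspec := Nat.find_spec hex
  have hmin := fun m ↦ Nat.find_min hex (m := m)
  generalize Nat.find hex = r at hspec hmin
  rcases r with _ | _ | k
  · refine .inl (padeWindow_of_lt hδ hBpos ?_ hspec)
    calc 14 * ρ ^ 4 * (4 * B) ^ 0 < 3000 * ρ ^ 4 := by linarith [show 0 < ρ ^ 4 by positivity]
      _ ≤ 3000 * ρ ^ 5 := by gcongr; omega
      _ = 3000 * ρ ^ 3 * ρ ^ 2 := by ring
      _ ≤ B * X ^ 2 := by gcongr
  · refine .inr (.inl (padeWindow_of_lt hδ hBpos ?_ hspec))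
    have hle : B ≤ 6 * (ρ * X) := by simpa using hmin 0 one_pos
    have hX' : 500 * ρ ^ 2 ≤ X := by
      refine le_of_mul_le_mul_left (a := 6 * ρ) ?_ (by positivity)
      linarith
    calc 14 * ρ ^ 4 * (4 * B) ^ 1 = B * (56 * ρ ^ 4) := by ring
      _ < B * (500 * ρ ^ 2) ^ 2 := by gcongr; linarith [show 0 < ρ ^ 4 by positivity]
      _ ≤ B * X ^ 2 := by gcongr
  · have hnext := lt_mul_sq_of_pow_le hρ hB0 hB (not_lt.mp (hmin (k + 1) (by omega)))
    refine .inr (.inr ⟨k + 2, padeWindow_of_lt hδ hBpos (lt_of_le_of_lt ?_ hnext) hspec,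
      padeWindow_of_lt hδ hBpos hnext ?_⟩)
    · gcongr
      · linarith
      · omega
    · calc 6 * (ρ * X) * 17 ^ (k + 3) = 17 * (6 * (ρ * X) * 17 ^ (k + 2)) := by ring
        _ < 17 * B ^ (k + 3) := by gcongr
        _ ≤ B * B ^ (k + 3) := by gcongr; linarith
        _ = B ^ (k + 3 + 1) := by ring

end PadeForms

section LinearPadeForm

open ComplexConjugate

local notation "ω" => cubeRootOne
local notation "θ" => sqrtNegThree

lemma exists_eq_pow_of_pow_eq_mul_pow {a b n : ℤ} {k : ℕ} (hk : k ≠ 0) (hb : b ≠ 0)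
    (h : a ^ k = n * b ^ k) : ∃ c, n = c ^ k ∧ a = b * c := by
  obtain ⟨c, rfl⟩ := (Int.pow_dvd_pow_iff hk).mp (Dvd.intro_left n h.symm)
  refine ⟨c, mul_right_cancel₀ (pow_ne_zero k hb) ?_, rfl⟩
  rw [← h, mul_pow, mul_comm]

lemma sub_mul_conj_eq_of_padeForm_one_eq_zero {β x w : ℂ} (hx : x * β = conj β)
    (hb : β - conj β = 3 * θ) (h : padeForm 1 x w = 0) :
    (β + conj β - θ) * conj w = (β + conj β + θ) * w := by
  rw [padeForm, pade_one, pade_one] at h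
  push_cast at h
  linear_combination β * h + (-(4 / 3) * conj w + (2 / 3) * w) * hx
    + (1 / 3) * (conj w + w) * hb

lemma two_mul_eq_of_sub_conj {β n : ℂ} (hb : β - conj β = 3 * θ) (hn : β + conj β = n) :
    2 * β = n + 3 * θ := by
  linear_combination hb + hn

/-- By `hz` and `hz'` the numbers `ξ` and `(n - √-3) ξ₀` are proportional with a self-conjugate
factor, so that the equation for `ξ` can be compared with the one for `ξ₀`. -/
lemma SolvesThue.pow_three_eq {A ξ₀ ξ n m z : ℂ} (h₀ : SolvesThue A ξ₀) (h : SolvesThue A ξ)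
    (hn : A * ξ₀ ^ 3 + conj (A * ξ₀ ^ 3) = n) (hm : ξ₀ * conj ξ₀ = m)
    (hz : (n + θ) * (ξ * conj ξ₀) = z) (hz' : (n - θ) * conj (ξ * conj ξ₀) = z) :
    ((n ^ 2 + 3) * m) ^ 3 = n * (-2 * z) ^ 3 := by
  have hβ := two_mul_eq_of_sub_conj h₀ hn
  rw [SolvesThue] at h h₀
  simp only [map_mul, map_pow, Complex.conj_conj] at h h₀ hz' hn
  have hξ : (n ^ 2 + 3) * m * ξ = z * ((n - θ) * ξ₀) := by
    linear_combination (-(n ^ 2 + 3) * ξ) * hm + ((n - θ) * ξ₀) * hz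
      + (ξ * conj ξ₀ * ξ₀) * sqrtNegThree_sq
  have hξ' : (n ^ 2 + 3) * m * conj ξ = z * ((n + θ) * conj ξ₀) := by
    linear_combination (-(n ^ 2 + 3) * conj ξ) * hm + ((n + θ) * conj ξ₀) * hz'
      + (conj ξ * conj ξ₀ * ξ₀) * sqrtNegThree_sq
  have hcube : ((n ^ 2 + 3) * m) ^ 3 * (A * ξ ^ 3) = z ^ 3 * (n - θ) ^ 3 * (A * ξ₀ ^ 3) := by
    calc _ = A * ((n ^ 2 + 3) * m * ξ) ^ 3 := by ring
      _ = _ := by rw [hξ]; ring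
  have hcube' : ((n ^ 2 + 3) * m) ^ 3 * (conj A * conj ξ ^ 3) =
      z ^ 3 * (n + θ) ^ 3 * (conj A * conj ξ₀ ^ 3) := by
    calc _ = conj A * ((n ^ 2 + 3) * m * conj ξ) ^ 3 := by ring
      _ = _ := by rw [hξ']; ring
  refine mul_right_cancel₀ (mul_ne_zero three_ne_zero sqrtNegThree_ne_zero) ?_
  linear_combination -((n ^ 2 + 3) * m) ^ 3 * h + hcube - hcube'
    + (z ^ 3 * (n - θ) ^ 3 / 2) * hβ - (z ^ 3 * (n + θ) ^ 3 / 2) * (hβ - 2 * h₀)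
    + (8 * z ^ 3 * n * θ) * sqrtNegThree_sq

lemma SolvesThue.exists_eq_pow_three {A ξ₀ ξ : ℂ} {n : ℤ} (h₀ : SolvesThue A ξ₀)
    (h : SolvesThue A ξ) (hξ₀ : ξ₀ ∈ eisensteinIntegers) (hξ : ξ ∈ eisensteinIntegers)
    (hn : A * ξ₀ ^ 3 + conj (A * ξ₀ ^ 3) = n)
    (hw : (n - θ) * conj (ξ * conj ξ₀) = (n + θ) * (ξ * conj ξ₀)) :
    ∃ c : ℤ, n = c ^ 3 ∧ (n - θ) * ξ₀ = -2 * c * ξ := by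
  obtain ⟨m, hm⟩ := exists_intCast_eq_of_conj_eq
    (mul_mem hξ₀ (conj_mem_eisensteinIntegers hξ₀)) (by simp [mul_comm])
  obtain ⟨z, hz⟩ := exists_intCast_eq_of_conj_eq (z := (n + θ) * (ξ * conj ξ₀))
    (mul_mem (add_mem (intCast_mem _ n) sqrtNegThree_mem_eisensteinIntegers)
      (mul_mem hξ (conj_mem_eisensteinIntegers hξ₀)))
    (by rw [← hw, map_mul, map_sub, map_intCast, conj_sqrtNegThree, sub_neg_eq_add,
      Complex.conj_conj, hw])
  have hcube : ((n ^ 2 + 3) * m) ^ 3 = n * (-2 * z) ^ 3 := by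
    exact_mod_cast h₀.pow_three_eq h hn hm hz (hw.trans hz)
  have hm0 : m ≠ 0 := by
    rintro rfl
    simp [h₀.ne_zero] at hm
  have hz0 : -2 * z ≠ 0 := by
    intro hz0
    rw [hz0, zero_pow three_ne_zero, mul_zero, pow_eq_zero_iff three_ne_zero] at hcube
    exact mul_ne_zero (by positivity) hm0 hcube
  obtain ⟨c, hnc, hc⟩ := exists_eq_pow_of_pow_eq_mul_pow three_ne_zero hz0 hcube
  have hzC : (z : ℂ) ≠ 0 := Int.cast_ne_zero.mpr (right_ne_zero_of_mul hz0)
  refine ⟨c, hnc, mul_left_cancel₀ hzC ?_⟩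
  have hcC : ((n : ℂ) ^ 2 + 3) * m = -2 * z * c := by exact_mod_cast hc
  linear_combination ξ * hcC + (n ^ 2 + 3) * ξ * hm - ((n - θ) * ξ₀) * hz
    - (ξ * conj ξ₀ * ξ₀) * sqrtNegThree_sq

lemma dvd_three_of_sub_mul_eq {x y c : ℤ} {ξ : ℂ} (hxy : IsCoprime x y)
    (hξ : ξ ∈ eisensteinIntegers) (h : ((c ^ 3 : ℤ) - θ) * (x + y * ω) = -2 * c * ξ) : c ∣ 3 := by
  have hmem : -2 * (((c ^ 3 : ℤ) + θ) * ξ) - (c : ℂ) ^ 5 * (x + y * ω) ∈ eisensteinIntegers :=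
    sub_mem (mul_mem (by exact_mod_cast intCast_mem eisensteinIntegers (-2))
        (mul_mem (add_mem (intCast_mem _ _) sqrtNegThree_mem_eisensteinIntegers) hξ))
      (mul_mem (pow_mem (intCast_mem _ c) _) (add_mul_mem_eisensteinIntegers x y))
  obtain ⟨p, q, hpq⟩ := hmem
  have hcoord : ((c * p : ℤ) : ℂ) + (c * q : ℤ) * ω = (3 * x : ℤ) + (3 * y : ℤ) * ω := by
    push_cast at hpq h ⊢
    linear_combination -c * hpq - (c ^ 3 + θ) * h - (x + y * ω) * sqrtNegThree_sq
  obtain ⟨hx, hy⟩ := add_mul_cubeRootOne_inj.mp hcoord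
  obtain ⟨u, v, huv⟩ := hxy
  exact ⟨u * p + v * q, by linear_combination (-3) * huv - u * hx - v * hy⟩

theorem SolvesThue.padeForm_one_ne_zero {A ξ x : ℂ} {x₀ y₀ : ℤ} (hA : A ∈ eisensteinIntegers)
    (hcop : IsCoprime x₀ y₀) (h₀ : SolvesThue A (x₀ + y₀ * ω)) (h : SolvesThue A ξ)
    (hξ : ξ ∈ eisensteinIntegers) (hβ : 17 ≤ ‖A * (x₀ + y₀ * ω) ^ 3‖)
    (hx : x * (A * (x₀ + y₀ * ω) ^ 3) = conj (A * (x₀ + y₀ * ω) ^ 3)) :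
    padeForm 1 x (ξ * conj (x₀ + y₀ * ω)) ≠ 0 := by
  intro hform
  have hlin := sub_mul_conj_eq_of_padeForm_one_eq_zero hx h₀ hform
  have hξ₀ := add_mul_mem_eisensteinIntegers x₀ y₀
  have hβE := mul_mem hA (pow_mem hξ₀ 3)
  obtain ⟨n, hn⟩ := exists_intCast_eq_of_conj_eq
    (add_mem hβE (conj_mem_eisensteinIntegers hβE)) (by simp [add_comm])
  rw [hn] at hlin
  obtain ⟨c, rfl, hc⟩ := h₀.exists_eq_pow_three h hξ₀ hξ hn hlin
  have hc3 : |c| ≤ 3 :=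
    Int.le_of_dvd three_pos ((abs_dvd c 3).mpr (dvd_three_of_sub_mul_eq hcop hξ hc))
  have hc27 : ‖((c ^ 3 : ℤ) : ℂ)‖ ≤ 27 := by
    rw [Complex.norm_intCast, Int.cast_pow, abs_pow]
    calc |(c : ℝ)| ^ 3 ≤ 3 ^ 3 := by gcongr; exact_mod_cast hc3
      _ = 27 := by norm_num
  have hsize : 2 * ‖A * (x₀ + y₀ * ω) ^ 3‖ ≤ ‖((c ^ 3 : ℤ) : ℂ)‖ + 3 * ‖θ‖ := by
    have hnorm := congrArg norm (two_mul_eq_of_sub_conj h₀ hn)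
    rw [norm_mul, Complex.norm_ofNat] at hnorm
    refine hnorm.trans_le ((norm_add_le _ _).trans_eq ?_)
    rw [norm_mul, Complex.norm_ofNat]
  linarith [norm_sqrtNegThree_lt]

end LinearPadeForm

section ThueUniqueness

open ComplexConjugate

local notation "ω" => cubeRootOne
local notation "θ" => sqrtNegThree

lemma SolvesThue.eq_of_norm_sub_mul_conj_le {A ξ : ℂ} {x₀ y₀ : ℤ} {φ : ℝ}
    (hA : A ∈ eisensteinIntegers) (hAn : 10 ^ 7 ≤ ‖A‖ ^ 2) (hcop : IsCoprime x₀ y₀)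
    (h₀ : SolvesThue A (x₀ + y₀ * ω)) (h : SolvesThue A ξ) (hξ : ξ ∈ eisensteinIntegers)
    (hle : ‖(x₀ : ℂ) + y₀ * ω‖ ≤ ‖ξ‖)
    (hφ : Complex.exp (φ * Complex.I) * (A * (x₀ + y₀ * ω) ^ 3) = conj (A * (x₀ + y₀ * ω) ^ 3))
    (hφ' : |φ| ≤ 8.2 / ‖A * (x₀ + y₀ * ω) ^ 3‖)
    (hclose : ‖ξ * conj (x₀ + y₀ * ω) -
      Complex.exp ((1 / 3 * φ : ℝ) * Complex.I) * conj (ξ * conj (x₀ + y₀ * ω))‖ *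
        (‖A * (x₀ + y₀ * ω) ^ 3‖ * ‖ξ‖ ^ 2) ≤ 7 * ‖(x₀ : ℂ) + y₀ * ω‖ ^ 4) :
    ξ = x₀ + y₀ * ω := by
  have hξ₀ := add_mul_mem_eisensteinIntegers x₀ y₀
  have hone := h₀.padeForm_one_ne_zero (x := Complex.exp (φ * Complex.I)) hA hcop h hξ
  generalize (x₀ : ℂ) + y₀ * ω = ξ₀ at *
  have hρ := one_le_norm_of_mem_eisensteinIntegers hξ₀ h₀.ne_zero
  have hw := mul_mem hξ (conj_mem_eisensteinIntegers hξ₀)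
  have hw0 : ξ * conj ξ₀ ≠ 0 := mul_ne_zero h.ne_zero ((map_ne_zero _).mpr h₀.ne_zero)
  have hB : 10 ^ 7 * ‖ξ₀‖ ^ 6 ≤ ‖A * ξ₀ ^ 3‖ ^ 2 := by
    rw [norm_mul, norm_pow, mul_pow, ← pow_mul]
    gcongr
  have hB17 : 17 ≤ ‖A * ξ₀ ^ 3‖ := by
    refine le_of_sq_le_sq ?_ (norm_nonneg _)
    linarith [one_le_pow₀ hρ (n := 6)]
  have hβ0 : A * ξ₀ ^ 3 ≠ 0 := norm_pos_iff.mp (by linarith)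
  have hvanish := fun r ↦ padeForm_eq_zero (r := r) (mul_mem hA (pow_mem hξ₀ 3)) hβ0 h₀ hφ hφ' hw
  rw [show ‖ξ * conj ξ₀‖ = ‖ξ₀‖ * ‖ξ‖ by rw [norm_mul, RCLike.norm_conj, mul_comm]] at hvanish
  rcases exists_padeWindow hρ hle (norm_nonneg _) hB hclose with hr | hr | ⟨r, hr, hr'⟩
  · exact h₀.eq_of_conj_mul_eq h (sub_eq_zero.mp ((padeForm_zero _ _).symm.trans (hvanish 0 hr)))
  · exact absurd (hvanish 1 hr) (hone hB17 hφ)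
  · have hx : Complex.exp (φ * Complex.I) ≠ 1 := by
      intro hx
      rw [hx, one_mul] at hφ
      exact mul_ne_zero three_ne_zero sqrtNegThree_ne_zero (h₀.symm.trans (sub_eq_zero.mpr hφ))
    exact absurd (eq_zero_of_padeForm_eq_zero hx (hvanish r hr) (hvanish _ hr')) hw0

theorem SolvesThue.exists_cubeRootOne_pow_mul_eq {A ξ : ℂ} {x₀ y₀ : ℤ}
    (hA : A ∈ eisensteinIntegers) (hAn : 10 ^ 7 ≤ ‖A‖ ^ 2) (hcop : IsCoprime x₀ y₀)
    (h₀ : SolvesThue A (x₀ + y₀ * ω)) (h : SolvesThue A ξ) (hξ : ξ ∈ eisensteinIntegers)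
    (hle : ‖(x₀ : ℂ) + y₀ * ω‖ ≤ ‖ξ‖) : ∃ j : ℕ, ω ^ j * ξ = x₀ + y₀ * ω := by
  have hA0 : A ≠ 0 := by
    rintro rfl
    norm_num at hAn
  obtain ⟨φ, hφ, hφ'⟩ := exists_exp_mul_eq_conj (mul_ne_zero hA0 (pow_ne_zero 3 h₀.ne_zero)) h₀
  have hcbrt : Complex.exp ((1 / 3 * φ : ℝ) * Complex.I) ^ 3 = Complex.exp (φ * Complex.I) := by
    rw [← Complex.exp_nat_mul]
    congr 1
    push_cast
    ring
  obtain ⟨j, hj⟩ := h.exists_norm_sub_mul_conj_le h₀.ne_zero (hcbrt.symm ▸ hφ)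
  have hnorm : ‖ω ^ j * ξ‖ = ‖ξ‖ := by
    rw [norm_mul, norm_pow, norm_cubeRootOne, one_pow, one_mul]
  rw [← hnorm] at hj hle
  exact ⟨j, h₀.eq_of_norm_sub_mul_conj_le hA hAn hcop (h.cubeRootOne_pow_mul j)
    (mul_mem (pow_mem cubeRootOne_mem_eisensteinIntegers j) hξ) hle hφ hφ' hj⟩

end ThueUniqueness

section QuadraticForms

lemma exists_abs_add_mul_le (m : ℤ) {n : ℤ} (hn : n ≠ 0) : ∃ k : ℤ, |m + 2 * n * k| ≤ |n| := by
  have h := abs_sub_round ((m : ℚ) / (2 * n))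
  refine ⟨-round ((m : ℚ) / (2 * n)), ?_⟩
  have hnQ : (n : ℚ) ≠ 0 := Int.cast_ne_zero.mpr hn
  qify
  calc |(m : ℚ) + 2 * n * -round ((m : ℚ) / (2 * n))|
      = |2 * (n : ℚ)| * |(m : ℚ) / (2 * n) - round ((m : ℚ) / (2 * n))| := by
        rw [← abs_mul, mul_sub, mul_div_cancel₀ _ (by simpa using hnQ)]
        ring_nf
    _ ≤ |2 * (n : ℚ)| * (1 / 2) := by gcongr
    _ = |(n : ℚ)| := by rw [abs_mul, abs_two]; ring

lemma natAbs_lt_natAbs_of_discrim_eq {α β γ : ℤ} (h : discrim α β γ = -3) (hβ : |β| ≤ |α|)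
    (hα : 1 < |α|) : γ.natAbs < α.natAbs := by
  rw [← Int.ofNat_lt, Int.natCast_natAbs, Int.natCast_natAbs]
  rw [discrim] at h
  have hβ2 : β ^ 2 ≤ |α| ^ 2 := by rw [sq_abs]; exact sq_le_sq.mpr hβ
  have hprod : 4 * (|α| * |γ|) ≤ |α| ^ 2 + 3 := by
    rw [← abs_mul, abs_of_nonneg (by nlinarith [sq_nonneg β])]
    linarith
  nlinarith [abs_nonneg γ]

/-- Gauss reduction: as long as `1 < |α|`, a translation followed by a swap of the variables
decreases `|α|`. -/
theorem exists_sq_eq_one_of_discrim_eq_neg_three {α β γ : ℤ} (h : discrim α β γ = -3) :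
    ∃ x y : ℤ, (α * x ^ 2 + β * x * y + γ * y ^ 2) ^ 2 = 1 := by
  induction hn : α.natAbs using Nat.strong_induction_on generalizing α β γ with
  | _ n ih =>
  have hα : α ≠ 0 := by
    rintro rfl
    rw [discrim] at h
    nlinarith [sq_nonneg β]
  rcases (Int.one_le_abs hα).eq_or_lt with hα1 | hα1
  · exact ⟨1, 0, by rw [← sq_abs]; simp [← hα1]⟩
  obtain ⟨k, hk⟩ := exists_abs_add_mul_le β hα
  have hdisc : discrim α (β + 2 * α * k) (α * k ^ 2 + β * k + γ) = -3 := by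
    rw [← h, discrim, discrim]; ring
  have hdisc' : discrim (α * k ^ 2 + β * k + γ) (β + 2 * α * k) α = -3 := by
    rw [← hdisc, discrim, discrim]; ring
  obtain ⟨x, y, hxy⟩ := ih _ (hn ▸ natAbs_lt_natAbs_of_discrim_eq hdisc hk hα1) hdisc' rfl
  exact ⟨y + k * x, x, by rw [← hxy]; ring⟩

end QuadraticForms

section Automorphs

variable {a b c d : ℤ}

/-- The form `aX³ + bX²Y + cXY² + dY³` has no zero on `ℤ²` besides the origin. -/
def IsAnisotropic (a b c d : ℤ) : Prop := ∀ x y : ℤ, cubicForm a b c d x y = 0 → x = 0 ∧ y = 0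

/-- The linear map `f` of `ℤ²` preserves the form `aX³ + bX²Y + cXY² + dY³`. -/
def IsAutomorph (a b c d : ℤ) (f : ℤ × ℤ →ₗ[ℤ] ℤ × ℤ) : Prop :=
  ∀ v, cubicForm a b c d (f v).1 (f v).2 = cubicForm a b c d v.1 v.2

/-- The determinant of the `2 × 2` matrix with columns `v` and `w`. -/
def pairDet (v w : ℤ × ℤ) : ℤ := v.1 * w.2 - v.2 * w.1

/-- The action of `2 × 2` integer matrices on `ℤ²`, with column vectors written as pairs. -/
noncomputable def matAction (M : Matrix (Fin 2) (Fin 2) ℤ) : ℤ × ℤ →ₗ[ℤ] ℤ × ℤ :=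
  Matrix.toLin (.finTwoProd ℤ) (.finTwoProd ℤ) M

lemma matAction_apply (M : Matrix (Fin 2) (Fin 2) ℤ) (v : ℤ × ℤ) :
    matAction M v = (M 0 0 * v.1 + M 0 1 * v.2, M 1 0 * v.1 + M 1 1 * v.2) := by
  rw [matAction, M.eta_fin_two, Matrix.toLin_finTwoProd_apply]
  rfl

lemma matAction_matAction (M : Matrix (Fin 2) (Fin 2) ℤ) (v : ℤ × ℤ) :
    matAction M (matAction M v) = M.trace • matAction M v - M.det • v := by
  ext <;> simp only [matAction_apply, Matrix.trace_fin_two, Matrix.det_fin_two, smul_eq_mul,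
    Prod.fst_sub, Prod.snd_sub, Prod.smul_fst, Prod.smul_snd] <;> ring

lemma pairDet_matAction (M : Matrix (Fin 2) (Fin 2) ℤ) (x y : ℤ) :
    pairDet (x, y) (matAction M (x, y)) =
      M 1 0 * x ^ 2 + (M 1 1 - M 0 0) * x * y + -M 0 1 * y ^ 2 := by
  rw [matAction_apply, pairDet]
  ring

lemma eq_zero_of_smul_add_smul_eq_zero {v w : ℤ × ℤ} (hvw : pairDet v w ≠ 0) {x y : ℤ}
    (h : x • v + y • w = 0) : x = 0 ∧ y = 0 := by
  have h₁ : x * v.1 + y * w.1 = 0 := congrArg Prod.fst h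
  have h₂ : x * v.2 + y * w.2 = 0 := congrArg Prod.snd h
  refine ⟨mul_right_cancel₀ hvw ?_, mul_right_cancel₀ hvw ?_⟩
  · rw [pairDet]
    linear_combination w.2 * h₁ - w.1 * h₂
  · rw [pairDet]
    linear_combination v.1 * h₂ - v.2 * h₁

lemma exists_eq_smul_add_smul {v w : ℤ × ℤ} (hvw : pairDet v w ^ 2 = 1) (u : ℤ × ℤ) :
    ∃ x y : ℤ, u = x • v + y • w := by
  refine ⟨pairDet v w * pairDet u w, pairDet v w * pairDet v u, ?_⟩
  rw [pairDet] at hvw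
  ext <;> simp only [pairDet, Prod.fst_add, Prod.snd_add, Prod.smul_fst, Prod.smul_snd,
    smul_eq_mul]
  · linear_combination (-u.1) * hvw
  · linear_combination (-u.2) * hvw

lemma exists_cubicForm_comp (a b c d : ℤ) (v w : ℤ × ℤ) : ∃ a' b' c' d' : ℤ,
    (∀ x y : ℤ, cubicForm a' b' c' d' x y =
      cubicForm a b c d (x • v + y • w).1 (x • v + y • w).2) ∧
    cubicDisc a' b' c' d' = pairDet v w ^ 6 * cubicDisc a b c d := by
  obtain ⟨m, n⟩ := v
  obtain ⟨m', n'⟩ := w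
  refine ⟨cubicForm a b c d m n,
    3 * a * m ^ 2 * m' + b * (m ^ 2 * n' + 2 * m * n * m') + c * (2 * m * n * n' + n ^ 2 * m') +
      3 * d * n ^ 2 * n',
    3 * a * m * m' ^ 2 + b * (m' ^ 2 * n + 2 * m * n' * m') + c * (2 * m' * n * n' + n' ^ 2 * m) +
      3 * d * n * n' ^ 2,
    cubicForm a b c d m' n', fun x y ↦ ?_, ?_⟩
  · simp only [cubicForm, Prod.fst_add, Prod.snd_add, Prod.smul_fst, Prod.smul_snd, smul_eq_mul]
    ring
  · simp only [cubicForm, cubicDisc, pairDet]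
    ring

lemma IsAutomorph.exists_companionForm {f : ℤ × ℤ →ₗ[ℤ] ℤ × ℤ} {v : ℤ × ℤ} {t δ : ℤ}
    (hf : IsAutomorph a b c d f) (hv : f (f v) = t • f v - δ • v) : ∃ a' b' c' d' : ℤ,
    (∀ x y : ℤ, cubicForm a' b' c' d' x y =
      cubicForm a b c d (x • v + y • f v).1 (x • v + y • f v).2) ∧
    cubicDisc a' b' c' d' = pairDet v (f v) ^ 6 * cubicDisc a b c d ∧
    ∀ x y : ℤ, cubicForm a' b' c' d' (-δ * y) (x + t * y) = cubicForm a' b' c' d' x y := by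
  obtain ⟨a', b', c', d', hcomp, hdisc⟩ := exists_cubicForm_comp a b c d v (f v)
  refine ⟨a', b', c', d', hcomp, hdisc, fun x y ↦ ?_⟩
  have himage : f (x • v + y • f v) = (-δ * y) • v + (x + t * y) • f v := by
    rw [map_add, map_smul, map_smul, hv]
    module
  rw [hcomp, hcomp, ← himage, hf]

lemma IsAnisotropic.comp (hF : IsAnisotropic a b c d) {v w : ℤ × ℤ} (hvw : pairDet v w ≠ 0)
    {a' b' c' d' : ℤ} (hcomp : ∀ x y : ℤ, cubicForm a' b' c' d' x y =
      cubicForm a b c d (x • v + y • w).1 (x • v + y • w).2) : IsAnisotropic a' b' c' d' :=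
  fun x y h ↦ eq_zero_of_smul_add_smul_eq_zero hvw
    (Prod.ext_iff.mpr (hF _ _ ((hcomp x y).symm.trans h)))

lemma IsAnisotropic.leadingCoeff_ne_zero (hF : IsAnisotropic a b c d) : a ≠ 0 := by
  rintro rfl
  exact one_ne_zero (hF 1 0 (by simp [cubicForm])).1

lemma coeff_relations_of_companion_invariant {t δ : ℤ}
    (h : ∀ x y : ℤ, cubicForm a b c d (-δ * y) (x + t * y) = cubicForm a b c d x y) :
    d = a ∧ 3 * t * a - δ * c = b ∧ δ ^ 2 * b - 2 * δ * t * c + 3 * t ^ 2 * a = c ∧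
      -δ ^ 3 * a + δ ^ 2 * t * b - δ * t ^ 2 * c + t ^ 3 * a = a := by
  have h₁ := h 1 0
  have h₂ := h 0 1
  have h₃ := h 1 1
  have h₄ := h 1 (-1)
  simp only [cubicForm] at h₁ h₂ h₃ h₄
  obtain rfl : d = a := by linear_combination h₁
  refine ⟨rfl, ?_, ?_, by linear_combination h₂⟩ <;>
    refine mul_left_cancel₀ (two_ne_zero' ℤ) ?_
  · linear_combination h₃ - h₄ - 2 * h₂
  · linear_combination h₃ + h₄

lemma trace_eq_of_companion_invariant {t : ℤ} (hF : IsAnisotropic a b c d)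
    (h : ∀ x y : ℤ, cubicForm a b c d (-1 * y) (x + t * y) = cubicForm a b c d x y) : t = -1 := by
  obtain ⟨hd, hb, hc, ha⟩ := coeff_relations_of_companion_invariant h
  by_contra ht
  have ht1 : t + 1 ≠ 0 := by lia
  have hlin : 2 * c = 3 * t * a := mul_left_cancel₀ ht1 (by linear_combination -hb - hc)
  have hmul : a * ((t + 1) * (t - 2) ^ 2) = 0 := by
    linear_combination -2 * ha - 2 * t * hb - (t + t ^ 2) * hlin
  simp only [mul_eq_zero, hF.leadingCoeff_ne_zero, ht1, false_or] at hmul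
  obtain rfl : t = 2 := sub_eq_zero.mp (pow_eq_zero_iff two_ne_zero |>.mp hmul)
  have hzero : cubicForm a b c d 1 (-1) = 0 := by
    rw [cubicForm]
    linarith
  exact absurd (hF _ _ hzero).1 one_ne_zero

lemma not_companion_invariant_neg_one {t : ℤ} (hF : IsAnisotropic a b c d) :
    ¬ ∀ x y : ℤ, cubicForm a b c d (-(-1) * y) (x + t * y) = cubicForm a b c d x y := by
  intro h
  obtain ⟨hd, hb, hc, ha⟩ := coeff_relations_of_companion_invariant h
  rcases eq_or_ne t 0 with rfl | ht
  · have hzero : cubicForm a b c d 1 (-1) = 0 := by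
      rw [cubicForm]
      linarith
    exact absurd (hF _ _ hzero).1 one_ne_zero
  have hlin : 3 * a + 2 * c + 3 * t * a = 0 :=
    mul_left_cancel₀ ht (by linear_combination hc + hb)
  have hquad : b + t * c + t ^ 2 * a = 0 := mul_left_cancel₀ ht (by linear_combination ha)
  have hmul : a * (t ^ 2 + 3) = 0 := by
    linear_combination -2 * hquad - 2 * hb + (1 + t) * hlin
  exact mul_ne_zero hF.leadingCoeff_ne_zero (by positivity) hmul

lemma exists_pairDet_matAction_ne_zero {M : Matrix (Fin 2) (Fin 2) ℤ} (ha : a ≠ 0)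
    (hM : IsAutomorph a b c d (matAction M)) (h1 : M ≠ 1) :
    ∃ v, pairDet v (matAction M v) ≠ 0 := by
  by_contra! hzero
  have h₁ := hzero (1, 0)
  have h₂ := hzero (0, 1)
  have h₃ := hzero (1, 1)
  rw [pairDet_matAction] at h₁ h₂ h₃
  have h01 : M 0 1 = 0 := by lia
  have h10 : M 1 0 = 0 := by lia
  have h11 : M 1 1 = M 0 0 := by lia
  have hcube : a * M 0 0 ^ 3 = a * 1 ^ 3 := by
    simpa [matAction_apply, cubicForm, h10] using hM (1, 0)
  have h00 : M 0 0 = 1 :=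
    (Odd.strictMono_pow (by decide : Odd 3)).injective (mul_left_cancel₀ ha hcube)
  exact h1 (M.eta_fin_two.trans (by rw [h11, h00, h01, h10, Matrix.one_fin_two]))

theorem IsAutomorph.trace_eq_and_det_eq {M : Matrix (Fin 2) (Fin 2) ℤ}
    (hM : IsAutomorph a b c d (matAction M)) (hF : IsAnisotropic a b c d) (hdet : IsUnit M.det)
    (h1 : M ≠ 1) : M.trace = -1 ∧ M.det = 1 := by
  obtain ⟨v, hv⟩ := exists_pairDet_matAction_ne_zero hF.leadingCoeff_ne_zero hM h1
  obtain ⟨a', b', c', d', hcomp, -, hinv⟩ := hM.exists_companionForm (matAction_matAction M v)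
  have hF' := hF.comp hv hcomp
  rcases Int.isUnit_iff.mp hdet with hδ | hδ
  · rw [hδ] at hinv
    exact ⟨trace_eq_of_companion_invariant hF' hinv, hδ⟩
  · rw [hδ] at hinv
    exact absurd hinv (not_companion_invariant_neg_one hF')

lemma exists_pairDet_matAction_sq_eq_one {M : Matrix (Fin 2) (Fin 2) ℤ} (ht : M.trace = -1)
    (hδ : M.det = 1) : ∃ v, pairDet v (matAction M v) ^ 2 = 1 := by
  rw [Matrix.trace_fin_two] at ht
  rw [Matrix.det_fin_two] at hδ
  have hdisc : discrim (M 1 0) (M 1 1 - M 0 0) (-M 0 1) = -3 := by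
    rw [discrim]
    linear_combination (M 0 0 + M 1 1 - 1) * ht - 4 * hδ
  obtain ⟨x, y, hxy⟩ := exists_sq_eq_one_of_discrim_eq_neg_three hdisc
  exact ⟨(x, y), by rw [pairDet_matAction, hxy]⟩

end Automorphs

section Irreducibility

open MvPolynomial

variable {K : Type*} [Field K]

/-- The polynomial `aX³ + bX²Y + cXY² + dY³`, with `X = X 0` and `Y = X 1`. -/
noncomputable def cubicPoly (a b c d : K) : MvPolynomial (Fin 2) K :=
  C a * X 0 ^ 3 + C b * X 0 ^ 2 * X 1 + C c * X 0 * X 1 ^ 2 + C d * X 1 ^ 3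

lemma not_irreducible_mul_of_map_eq_zero {R S : Type*} [CommRing R] [CommRing S] [Nontrivial S]
    (f : R →+* S) {p q : R} (hp : f p = 0) (hq : f q = 0) : ¬ Irreducible (p * q) := fun h ↦
  (h.isUnit_or_isUnit rfl).elim (fun hu ↦ (hu.map f).ne_zero hp) fun hu ↦ (hu.map f).ne_zero hq

lemma not_irreducible_cubicPoly_of_root {a b c d m n : K} (hmn : m ≠ 0 ∨ n ≠ 0)
    (h : a * m ^ 3 + b * m ^ 2 * n + c * m * n ^ 2 + d * n ^ 3 = 0) :
    ¬ Irreducible (cubicPoly a b c d) := by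
  rcases eq_or_ne n 0 with rfl | hn
  · have hm : m ≠ 0 := by simpa using hmn
    obtain rfl : a = 0 := by simpa [hm] using h
    have hfactor : cubicPoly 0 b c d = X 1 * (C b * X 0 ^ 2 + C c * X 0 * X 1 + C d * X 1 ^ 2) := by
      rw [cubicPoly, map_zero]
      ring
    rw [hfactor]
    exact not_irreducible_mul_of_map_eq_zero constantCoeff (by simp) (by simp)
  · obtain ⟨s, rfl⟩ : ∃ s, m = s * n := ⟨m / n, (div_mul_cancel₀ m hn).symm⟩
    obtain rfl : d = -(a * s ^ 3 + b * s ^ 2 + c * s) :=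
      mul_right_cancel₀ (pow_ne_zero 3 hn) (by linear_combination h)
    have hfactor : cubicPoly a b c (-(a * s ^ 3 + b * s ^ 2 + c * s)) = (X 0 - C s * X 1) *
        (C a * X 0 ^ 2 + C (a * s + b) * X 0 * X 1 + C (a * s ^ 2 + b * s + c) * X 1 ^ 2) := by
      simp only [cubicPoly, map_neg, map_add, map_mul, map_pow]
      ring
    rw [hfactor]
    exact not_irreducible_mul_of_map_eq_zero constantCoeff (by simp) (by simp)

lemma isAnisotropic_of_irreducible {a b c d : ℤ}
    (h : Irreducible (cubicPoly (a : ℚ) b c d)) : IsAnisotropic a b c d := by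
  intro x y hxy
  by_contra hne
  refine not_irreducible_cubicPoly_of_root (m := (x : ℚ)) (n := y) ?_ ?_ h
  · rw [Int.cast_ne_zero, Int.cast_ne_zero]
    tauto
  · exact_mod_cast hxy

end Irreducibility

section Iterates

lemma ncard_range_iterate {α : Type*} {f : α → α} {x : α} (hx : x ∈ Function.periodicPts f) :
    (Set.range fun n ↦ f^[n] x).ncard = Function.minimalPeriod f x := by
  have hpos := Function.minimalPeriod_pos_of_mem_periodicPts hx
  have himage : (Set.range fun n ↦ f^[n] x) =
      (fun n ↦ f^[n] x) '' (Finset.range (Function.minimalPeriod f x)) := by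
    refine (Set.range_subset_iff.mpr fun n ↦ ?_).antisymm (Set.image_subset_range _ _)
    exact ⟨n % Function.minimalPeriod f x, by simpa using Nat.mod_lt n hpos,
      Function.iterate_mod_minimalPeriod_eq⟩
  rw [himage, Set.InjOn.ncard_image, Set.ncard_coe_finset, Finset.card_range]
  simpa [Set.Iio_def] using Function.iterate_injOn_Iio_minimalPeriod (f := f) (x := x)

lemma minimalPeriod_eq_three {E : Type*} [AddCommGroup E] [IsAddTorsionFree E] {f : E → E}
    (hf : ∀ v, f (f v) = -f v - v) {v : E} (hv : v ≠ 0) : Function.minimalPeriod f v = 3 := by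
  refine Function.minimalPeriod_eq_prime (hp := ⟨Nat.prime_three⟩) ?_ fun hfix ↦ hv ?_
  · rw [Function.IsPeriodicPt, Function.IsFixedPt, Function.iterate_succ_apply,
      Function.iterate_succ_apply, Function.iterate_one, hf (f v), hf v]
    abel
  · have h := hf v
    rw [hfix.eq, hfix.eq] at h
    have h3 : 3 • v = 0 := by
      nth_rw 1 [show 3 • v = v + 2 • v by abel, h]
      abel
    exact (smul_eq_zero.mp h3).resolve_left three_ne_zero

end Iterates

section CyclicCubicForms

local notation "ω" => cubeRootOne

variable {a b x y x₀ y₀ : ℤ}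

lemma solvesThue_of_cubicForm_eq_one (h : cubicForm a b (-(b + 3 * a)) a x y = 1) :
    SolvesThue ((3 * a + b : ℤ) + (3 * a : ℤ) * ω) (x + y * ω) := by
  have hform := congrArg (Int.cast : ℤ → ℂ) h
  rw [cubicForm] at hform
  simp only [SolvesThue, sqrtNegThree, map_mul, map_pow, conj_add_mul_cubeRootOne]
  push_cast at hform ⊢
  linear_combination 3 * (2 * ω + 1) * hform +
    y ^ 2 * (9 * a * x + b * y - 3 * a * y) * (2 * ω + 1) * cubeRootOne_sq

lemma cubicDisc_eq_sq (a b : ℤ) : cubicDisc a b (-(b + 3 * a)) a =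
    ((3 * a + b) ^ 2 - (3 * a + b) * (3 * a) + (3 * a) ^ 2) ^ 2 := by
  rw [cubicDisc]
  ring

lemma le_norm_sq_of_le_cubicDisc (hD : 10 ^ 14 ≤ cubicDisc a b (-(b + 3 * a)) a) :
    10 ^ 7 ≤ ‖((3 * a + b : ℤ) : ℂ) + (3 * a : ℤ) * ω‖ ^ 2 := by
  refine le_of_sq_le_sq ?_ (sq_nonneg _)
  rw [norm_add_mul_cubeRootOne_sq]
  rw [cubicDisc_eq_sq] at hD
  exact_mod_cast hD

lemma exists_eq_cubeRootOne_pow_mul (hD : 10 ^ 14 ≤ cubicDisc a b (-(b + 3 * a)) a)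
    (h₀ : cubicForm a b (-(b + 3 * a)) a x₀ y₀ = 1)
    (h : cubicForm a b (-(b + 3 * a)) a x y = 1) :
    ∃ j : ℕ, (x : ℂ) + y * ω = ω ^ j * (x₀ + y₀ * ω) := by
  have hA := add_mul_mem_eisensteinIntegers (3 * a + b) (3 * a)
  have hAn := le_norm_sq_of_le_cubicDisc hD
  have hcop : ∀ {m n : ℤ}, cubicForm a b (-(b + 3 * a)) a m n = 1 → IsCoprime m n := by
    intro m n hmn
    refine ⟨a * m ^ 2 + b * m * n - (b + 3 * a) * n ^ 2, a * n ^ 2, ?_⟩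
    rw [← hmn, cubicForm]
    ring
  have hT₀ := solvesThue_of_cubicForm_eq_one h₀
  have hT := solvesThue_of_cubicForm_eq_one h
  rcases le_total ‖(x₀ : ℂ) + y₀ * ω‖ ‖(x : ℂ) + y * ω‖ with hle | hle
  · obtain ⟨j, hj⟩ := hT₀.exists_cubeRootOne_pow_mul_eq hA hAn (hcop h₀) hT
      (add_mul_mem_eisensteinIntegers x y) hle
    refine ⟨2 * j, ?_⟩
    rw [← hj, ← mul_assoc, ← pow_add, ← Nat.succ_mul, pow_mul, cubeRootOne_pow_three, one_pow,
      one_mul]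
  · obtain ⟨j, hj⟩ := hT.exists_cubeRootOne_pow_mul_eq hA hAn (hcop h) hT₀
      (add_mul_mem_eisensteinIntegers x₀ y₀) hle
    exact ⟨j, hj.symm⟩

lemma smul_add_smul_eq_iterate {E : Type*} [AddCommGroup E] {f : E →ₗ[ℤ] E} {u : E}
    (hu : f (f u) = -f u - u) {j : ℕ} (h : (x : ℂ) + y * ω = ω ^ j * (x₀ + y₀ * ω)) :
    x • u + y • f u = f^[j] (x₀ • u + y₀ • f u) := by
  induction j generalizing x₀ y₀ with
  | zero =>
    rw [pow_zero, one_mul, add_mul_cubeRootOne_inj] at h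
    rw [h.1, h.2, Function.iterate_zero_apply]
  | succ j ih =>
    have hrot : ω * (x₀ + y₀ * ω) = ((-y₀ : ℤ) : ℂ) + (x₀ - y₀ : ℤ) * ω := by
      push_cast
      linear_combination (y₀ : ℂ) * cubeRootOne_sq
    have himage : f (x₀ • u + y₀ • f u) = (-y₀) • u + (x₀ - y₀) • f u := by
      rw [map_add, map_smul, map_smul, hu]
      module
    rw [pow_succ, mul_assoc, hrot] at h
    rw [Function.iterate_succ_apply, himage, ih h]

end CyclicCubicForms

section SolutionCount

variable {a b c d : ℤ} {M : Matrix (Fin 2) (Fin 2) ℤ}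

/-- In the basis `u, M u` of `ℤ²` the automorph becomes multiplication by `ω` on `ℤ[ω]`. -/
theorem IsAutomorph.exists_eq_iterate (hM : IsAutomorph a b c d (matAction M))
    (ht : M.trace = -1) (hδ : M.det = 1) (hD : 10 ^ 14 ≤ cubicDisc a b c d) {v w : ℤ × ℤ}
    (hv : cubicForm a b c d v.1 v.2 = 1) (hw : cubicForm a b c d w.1 w.2 = 1) :
    ∃ j : ℕ, w = (matAction M)^[j] v := by
  obtain ⟨u, hu⟩ := exists_pairDet_matAction_sq_eq_one ht hδ
  have hMu := matAction_matAction M u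
  rw [ht, hδ] at hMu
  obtain ⟨a', b', c', d', hcomp, hdisc, hinv⟩ := hM.exists_companionForm hMu
  obtain ⟨hd', hb', -, -⟩ := coeff_relations_of_companion_invariant hinv
  obtain rfl : c' = -(b' + 3 * a') := by lia
  subst hd'
  rw [show pairDet u (matAction M u) ^ 6 = (pairDet u (matAction M u) ^ 2) ^ 3 by ring, hu,
    one_pow, one_mul] at hdisc
  obtain ⟨x₀, y₀, rfl⟩ := exists_eq_smul_add_smul hu v
  obtain ⟨x, y, rfl⟩ := exists_eq_smul_add_smul hu w
  rw [← hcomp] at hv hw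
  obtain ⟨j, hj⟩ := exists_eq_cubeRootOne_pow_mul (hdisc ▸ hD) hv hw
  exact ⟨j, smul_add_smul_eq_iterate (by rw [hMu, neg_one_smul, one_smul]) hj⟩

lemma IsAutomorph.iterate {f : ℤ × ℤ →ₗ[ℤ] ℤ × ℤ} (hf : IsAutomorph a b c d f) (j : ℕ)
    (v : ℤ × ℤ) : cubicForm a b c d (f^[j] v).1 (f^[j] v).2 = cubicForm a b c d v.1 v.2 := by
  induction j with
  | zero => rfl
  | succ j ih => rw [Function.iterate_succ_apply', hf, ih]

lemma IsAutomorph.setOf_cubicForm_eq_one (hM : IsAutomorph a b c d (matAction M))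
    (ht : M.trace = -1) (hδ : M.det = 1) (hD : 10 ^ 14 ≤ cubicDisc a b c d) {v : ℤ × ℤ}
    (hv : cubicForm a b c d v.1 v.2 = 1) :
    {p : ℤ × ℤ | cubicForm a b c d p.1 p.2 = 1} = Set.range fun j ↦ (matAction M)^[j] v := by
  refine Set.Subset.antisymm (fun w hw ↦ ?_) (Set.range_subset_iff.mpr fun j ↦ ?_)
  · obtain ⟨j, rfl⟩ := hM.exists_eq_iterate ht hδ hD hv hw
    exact Set.mem_range_self j
  · exact (hM.iterate j v).trans hv

lemma ncard_range_iterate_matAction (ht : M.trace = -1) (hδ : M.det = 1) {v : ℤ × ℤ}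
    (hv : v ≠ 0) : (Set.range fun j ↦ (matAction M)^[j] v).ncard = 3 := by
  have hperiod : Function.minimalPeriod (matAction M) v = 3 := by
    refine minimalPeriod_eq_three (fun u ↦ ?_) hv
    rw [matAction_matAction, ht, hδ, neg_one_smul, one_smul]
  rw [ncard_range_iterate, hperiod]
  exact Function.minimalPeriod_pos_iff_mem_periodicPts.mp (by rw [hperiod]; norm_num)

end SolutionCount

theorem stmt8_general (a b c d : ℤ) (hirr : Irreducible (cubicPoly (a : ℚ) b c d))
    (haut : ∃ A : GL (Fin 2) ℤ, A ≠ 1 ∧ ∀ x y : ℤ,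
      cubicForm a b c d
        ((A : Matrix (Fin 2) (Fin 2) ℤ) 0 0 * x + (A : Matrix (Fin 2) (Fin 2) ℤ) 0 1 * y)
        ((A : Matrix (Fin 2) (Fin 2) ℤ) 1 0 * x + (A : Matrix (Fin 2) (Fin 2) ℤ) 1 1 * y) =
        cubicForm a b c d x y)
    (hD : 10 ^ 14 ≤ cubicDisc a b c d) :
    {p : ℤ × ℤ | cubicForm a b c d p.1 p.2 = 1}.Finite ∧
      ({p : ℤ × ℤ | cubicForm a b c d p.1 p.2 = 1}.ncard = 0 ∨
        {p : ℤ × ℤ | cubicForm a b c d p.1 p.2 = 1}.ncard = 3) := by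
  obtain ⟨A, hA1, hA⟩ := haut
  have hauto : IsAutomorph a b c d (matAction A) := fun v ↦ by
    rw [matAction_apply, hA]
  obtain ⟨htrace, hdet⟩ := hauto.trace_eq_and_det_eq (isAnisotropic_of_irreducible hirr)
    (Matrix.isUnits_det_units A) (fun h ↦ hA1 (Units.ext h))
  rcases Set.eq_empty_or_nonempty {p : ℤ × ℤ | cubicForm a b c d p.1 p.2 = 1} with h | ⟨v, hv⟩
  · rw [h]
    exact ⟨Set.finite_empty, .inl (Set.ncard_empty _)⟩
  · have hv0 : v ≠ 0 := by
      rintro rfl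
      simp [cubicForm] at hv
    have hcard := ncard_range_iterate_matAction htrace hdet hv0
    rw [hauto.setOf_cubicForm_eq_one htrace hdet hD hv]
    exact ⟨Set.finite_of_ncard_ne_zero (by rw [hcard]; norm_num), .inr hcard⟩

theorem stmt8 (a b c d : ℤ)
    (hirr : Irreducible
      (MvPolynomial.C (a : ℚ) * MvPolynomial.X 0 ^ 3 +
        MvPolynomial.C (b : ℚ) * MvPolynomial.X 0 ^ 2 * MvPolynomial.X 1 +
        MvPolynomial.C (c : ℚ) * MvPolynomial.X 0 * MvPolynomial.X 1 ^ 2 +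
        MvPolynomial.C (d : ℚ) * MvPolynomial.X 1 ^ 3 : MvPolynomial (Fin 2) ℚ))
    (hDpos : 0 < cubicDisc a b c d)
    (haut : ∃ A : GL (Fin 2) ℤ, A ≠ 1 ∧ ∀ x y : ℤ,
      cubicForm a b c d
        ((A : Matrix (Fin 2) (Fin 2) ℤ) 0 0 * x + (A : Matrix (Fin 2) (Fin 2) ℤ) 0 1 * y)
        ((A : Matrix (Fin 2) (Fin 2) ℤ) 1 0 * x + (A : Matrix (Fin 2) (Fin 2) ℤ) 1 1 * y) =
        cubicForm a b c d x y)
    (hD : 2560000000000000000 ≤ cubicDisc a b c d) :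
    {p : ℤ × ℤ | cubicForm a b c d p.1 p.2 = 1}.Finite ∧
      ({p : ℤ × ℤ | cubicForm a b c d p.1 p.2 = 1}.ncard = 0 ∨
        {p : ℤ × ℤ | cubicForm a b c d p.1 p.2 = 1}.ncard = 3) :=
  stmt8_general a b c d hirr haut (by linarith)
end
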